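/- arXiv:2604.01975 — 6 statements merged into one kernel-verified Lean document; each statement's English description precedes it below -/
import Mathlib

section
/- Fix an integer N ≥ 1 and nonnegative half-integers l_1, …, l_N (i.e. 2l_i ∈ ℕ; in a formalization, an element m with l_i + m ∈ {0, 1, …, 2l_i} can be encoded by the natural number l_i + m). Let M_l := {m = (m_1, …, m_N) : l_i + m_i ∈ {0, 1, …, 2l_i} for every i}, and for a half-integer K let M_{l,K} := {m ∈ M_l : Σ_i m_i = K}. For m ∈ M_l and 1 ≤ j ≤ N, m_j^± denotes the tuple obtained from m by replacing m_j with m_j ± 1. For a half-integer K define the real matrix B^+_K, with rows indexed by M_{l,K+1} and columns by M_{l,K}, by B^+_K[m, m'] = √((l_j − m_j + 1)(l_j + m_j)) if m' = m_j^− for some (necessarily unique) j, and 0 otherwise; and the real matrix B^−_K, with rows indexed by M_{l,K−1} and columns by M_{l,K}, by B^−_K[m, m'] = −√((l_j + m_j + 1)(l_j − m_j)) if m' = m_j^+ for some (necessarily unique) j, and 0 otherwise. Then: (1) (B^−_K)^T = −B^+_{K−1} as matrices with rows M_{l,K} and columns M_{l,K−1}; and (2) (B^+_K)^T · B^+_K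 − (B^−_K)^T · B^−_K = −2K · I, where I is the identity matrix on the index set M_{l,K}. -/
/-!
Write `e_j` for the `j`-th unit tuple and `c_j(a) = √((λ_j - a_j)(a_j + 1))`. Both matrices are
given by the same amplitudes: `B⁺[m, a] = ∑_j [m = a + e_j] c_j(a)` and
`B⁻[m, a] = -∑_j [a = m + e_j] c_j(m)`, which gives the transposition identity.

For the commutator identity, the `(a, b)` entry of `(B⁺)ᵀ B⁺` is a double sum over `(i, j)` of
contributions of intermediate tuples `m = a + e_i = b + e_j`, and that of `(B⁻)ᵀ B⁻` is a double
sum over contributions of tuples `m` with `a = m + e_i`, `b = m + e_j`. For `i ≠ j`, raising `i`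
and lowering `j` commute, so the `(i, j)` term of the former cancels the `(j, i)` term of the
latter (`raise_eq_lower`). The diagonal terms differ by `λ_i - 2 a_i` when `a = b` and vanish
otherwise (`raise_sub_lower`), and `∑_i (λ_i - 2 a_i) = -t`. The amplitudes vanish exactly where
an intermediate tuple would leave the box `0 ≤ m ≤ λ`, so no boundary terms appear.
-/

/-- The index set `M_{l,K}` of tuples `m` with `l_i + m_i ∈ {0,…,2l_i}` and `Σ_i m_i = K`,
encoded via the natural numbers `λ_i = 2 l_i`, `μ_i = l_i + m_i` and the doubled sum
parameter `t = 2K`: the constraint `Σ m_i = K` reads `2 Σ μ_i = Σ λ_i + t`. -/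
abbrev bddTuples (N : ℕ) (lam : Fin N → ℕ) (t : ℤ) : Type :=
  {μ : Fin N → ℕ // (∀ i, μ i ≤ lam i) ∧
    2 * (∑ i, (μ i : ℤ)) = (∑ i, (lam i : ℤ)) + t}

noncomputable instance (N : ℕ) (lam : Fin N → ℕ) (t : ℤ) :
    Fintype (bddTuples N lam t) := by
  have h : {μ : Fin N → ℕ | (∀ i, μ i ≤ lam i) ∧
      2 * (∑ i, (μ i : ℤ)) = (∑ i, (lam i : ℤ)) + t}.Finite := by
    apply Set.Finite.subset (Set.Finite.pi fun i : Fin N => Set.finite_Iic (lam i))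
    intro μ hμ
    rw [Set.mem_pi]
    intro i _
    exact hμ.1 i
  exact h.fintype

/-- The ladder matrix `B^+_K` with rows `M_{l,K+1}` (doubled parameter `s = t + 2`) and
columns `M_{l,K}` (doubled parameter `t`): the entry in row `m`, column `m'` is
`√((l_j − m_j + 1)(l_j + m_j))` if `m' = m_j^−` for the (necessarily unique) `j`, and `0`
otherwise; in the encoding, `l_j − m_j = λ_j − μ_j` and `l_j + m_j = μ_j`. -/
noncomputable def ladderBplus (N : ℕ) (lam : Fin N → ℕ) (s t : ℤ) :
    Matrix (bddTuples N lam s) (bddTuples N lam t) ℝ :=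
  Matrix.of fun μ μ' => ∑ j : Fin N,
    if μ'.1 = Function.update μ.1 j (μ.1 j - 1)
    then Real.sqrt (((lam j : ℝ) - (μ.1 j : ℝ) + 1) * (μ.1 j : ℝ)) else 0

/-- The ladder matrix `B^−_K` with rows `M_{l,K−1}` (doubled parameter `s = t − 2`) and
columns `M_{l,K}` (doubled parameter `t`): the entry in row `m`, column `m'` is
`−√((l_j + m_j + 1)(l_j − m_j))` if `m' = m_j^+`, and `0` otherwise. -/
noncomputable def ladderBminus (N : ℕ) (lam : Fin N → ℕ) (s t : ℤ) :
    Matrix (bddTuples N lam s) (bddTuples N lam t) ℝ :=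
  Matrix.of fun μ μ' => ∑ j : Fin N,
    if μ'.1 = Function.update μ.1 j (μ.1 j + 1)
    then -Real.sqrt (((μ.1 j : ℝ) + 1) * ((lam j : ℝ) - (μ.1 j : ℝ))) else 0

/-- The amplitude `√((λ_j - a_j)(a_j + 1))` for raising the `j`-th coordinate of `a`. -/
noncomputable def amp {N : ℕ} (lam a : Fin N → ℕ) (j : Fin N) : ℝ :=
  Real.sqrt (((lam j : ℝ) - a j) * ((a j : ℝ) + 1))

/-- The contribution of the index pair `(i, j)` to the entry `(a, b)` of `(B⁺)ᵀ B⁺`. -/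
noncomputable def raiseTerm {N : ℕ} (lam : Fin N → ℕ) (t : ℤ) (a b : Fin N → ℕ)
    (i j : Fin N) : ℝ :=
  ∑ m : bddTuples N lam (t + 2),
    (if m.1 = a + Pi.single i 1 then amp lam a i else 0) *
      (if m.1 = b + Pi.single j 1 then amp lam b j else 0)

/-- The contribution of the index pair `(i, j)` to the entry `(a, b)` of `(B⁻)ᵀ B⁻`. -/
noncomputable def lowerTerm {N : ℕ} (lam : Fin N → ℕ) (t : ℤ) (a b : Fin N → ℕ)
    (i j : Fin N) : ℝ :=
  ∑ m : bddTuples N lam (t - 2),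
    (if a = m.1 + Pi.single i 1 then amp lam m.1 i else 0) *
      (if b = m.1 + Pi.single j 1 then amp lam m.1 j else 0)

/-- The case `μ j = 0`, where the truncated subtraction in `ladderBplus` makes the condition
`a = μ`, contributes nothing because the square root vanishes. -/
lemma ladderBplus_apply {N : ℕ} (lam : Fin N → ℕ) (s t : ℤ)
    (μ : bddTuples N lam s) (a : bddTuples N lam t) :
    ladderBplus N lam s t μ a =
      ∑ j, if μ.1 = a.1 + Pi.single j 1 then amp lam a.1 j else 0 := by
  unfold ladderBplus
  rw [Matrix.of_apply]
  refine Finset.sum_congr rfl fun j _ => ?_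
  by_cases h0 : μ.1 j = 0
  · have h1 : μ.1 ≠ a.1 + Pi.single j 1 := by
      intro h
      have := congrFun h j
      simp at this
      omega
    simp [h0, h1]
  · have hiff : a.1 = Function.update μ.1 j (μ.1 j - 1) ↔ μ.1 = a.1 + Pi.single j 1 := by
      constructor <;> intro h <;> funext k <;> have hk := congrFun h k <;>
        by_cases hkj : k = j
      · subst hkj; simp at hk ⊢; omega
      · simp [hkj] at hk ⊢; omega
      · subst hkj; simp at hk ⊢; omega
      · simp [hkj] at hk ⊢; omega
    by_cases h : μ.1 = a.1 + Pi.single j 1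
    · rw [if_pos h, if_pos (hiff.2 h), amp]
      have hj : μ.1 j = a.1 j + 1 := by simpa using congrFun h j
      rw [hj]
      congr 1
      push_cast
      ring
    · rw [if_neg h, if_neg (fun h' => h (hiff.1 h'))]

lemma ladderBminus_apply {N : ℕ} (lam : Fin N → ℕ) (s t : ℤ)
    (μ : bddTuples N lam s) (a : bddTuples N lam t) :
    ladderBminus N lam s t μ a =
      -∑ j, if a.1 = μ.1 + Pi.single j 1 then amp lam μ.1 j else 0 := by
  unfold ladderBminus
  rw [Matrix.of_apply, ← Finset.sum_neg_distrib]
  refine Finset.sum_congr rfl fun j _ => ?_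
  have hu : Function.update μ.1 j (μ.1 j + 1) = μ.1 + Pi.single j 1 := by
    funext k
    by_cases hkj : k = j
    · subst hkj; simp
    · simp [hkj]
  rw [hu, amp, mul_comm]
  split_ifs <;> simp

lemma sum_add_single {N : ℕ} (a : Fin N → ℕ) (i : Fin N) :
    ∑ k, (((a + Pi.single i 1 : Fin N → ℕ) k : ℕ) : ℤ) = ∑ k, (a k : ℤ) + 1 := by
  have h : ∑ k, (a + Pi.single i 1 : Fin N → ℕ) k = ∑ k, a k + 1 := by
    simp [Finset.sum_add_distrib]
  exact_mod_cast h

lemma amp_eq_zero {N : ℕ} {lam a : Fin N → ℕ} {i : Fin N} (h : a i = lam i) :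
    amp lam a i = 0 := by
  simp [amp, h]

lemma raiseTerm_eq {N : ℕ} (lam : Fin N → ℕ) (t : ℤ) (a b : bddTuples N lam t)
    (i j : Fin N) :
    raiseTerm lam t a.1 b.1 i j =
      if a.1 + Pi.single i 1 = b.1 + Pi.single j 1 then amp lam a.1 i * amp lam b.1 j
      else 0 := by
  unfold raiseTerm
  by_cases hi : a.1 i = lam i
  · simp [amp_eq_zero hi]
  have hmem : (∀ k, (a.1 + Pi.single i 1 : Fin N → ℕ) k ≤ lam k) ∧
      2 * (∑ k, (((a.1 + Pi.single i 1 : Fin N → ℕ) k : ℕ) : ℤ)) = (∑ k, (lam k : ℤ)) + (t + 2) := by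
    refine ⟨fun k => ?_, ?_⟩
    · have := a.2.1 k
      by_cases hk : k = i
      · subst hk; simp; omega
      · simpa [hk] using this
    · rw [sum_add_single]
      have := a.2.2
      linarith
  rw [Finset.sum_eq_single (⟨a.1 + Pi.single i 1, hmem⟩ : bddTuples N lam (t + 2))]
  · simp
  · intro m _ hm
    rw [if_neg (fun h => hm (Subtype.ext h)), zero_mul]
  · simp

/-- The term is determined by the only possible intermediate tuple `m = a - e_i`. -/
lemma lowerTerm_of_eq {N : ℕ} (lam : Fin N → ℕ) (t : ℤ) (a b : bddTuples N lam t)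
    (i j : Fin N) (m : Fin N → ℕ) (ha : a.1 = m + Pi.single i 1) :
    lowerTerm lam t a.1 b.1 i j =
      if b.1 = m + Pi.single j 1 then amp lam m i * amp lam m j else 0 := by
  unfold lowerTerm
  have hmem : (∀ k, m k ≤ lam k) ∧
      2 * (∑ k, (m k : ℤ)) = (∑ k, (lam k : ℤ)) + (t - 2) := by
    have h1 := a.2.1
    have h2 := a.2.2
    rw [ha] at h1 h2
    refine ⟨fun k => le_trans (by simp) (h1 k), ?_⟩
    rw [sum_add_single] at h2
    linarith
  rw [Finset.sum_eq_single (⟨m, hmem⟩ : bddTuples N lam (t - 2))]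
  · simp [ha]
  · intro m' _ hm
    rw [if_neg, zero_mul]
    intro h
    exact hm (Subtype.ext (add_right_cancel (h.symm.trans ha)))
  · simp

lemma lowerTerm_of_zero {N : ℕ} (lam : Fin N → ℕ) (t : ℤ) (a b : Fin N → ℕ)
    (i j : Fin N) (ha : a i = 0) : lowerTerm lam t a b i j = 0 := by
  unfold lowerTerm
  refine Finset.sum_eq_zero fun m _ => ?_
  rw [if_neg, zero_mul]
  intro h
  have := congrFun h i
  simp at this
  omega

lemma exists_eq_add_single {N : ℕ} (a : Fin N → ℕ) (i : Fin N) (h : a i ≠ 0) :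
    ∃ m : Fin N → ℕ, a = m + Pi.single i 1 := by
  refine ⟨a - Pi.single i 1, funext fun k => ?_⟩
  by_cases hk : k = i
  · subst hk; simp; omega
  · simp [hk]

lemma raise_eq_lower {N : ℕ} (lam : Fin N → ℕ) (t : ℤ) (a b : bddTuples N lam t)
    {i j : Fin N} (hij : i ≠ j) :
    raiseTerm lam t a.1 b.1 i j = lowerTerm lam t a.1 b.1 j i := by
  rw [raiseTerm_eq]
  by_cases h0 : a.1 j = 0
  · rw [lowerTerm_of_zero _ _ _ _ _ _ h0, if_neg]
    intro h
    have := congrFun h j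
    simp [hij.symm, h0] at this
  · obtain ⟨m, hm⟩ := exists_eq_add_single a.1 j h0
    rw [lowerTerm_of_eq lam t a b j i m hm]
    have hiff : a.1 + Pi.single i 1 = b.1 + Pi.single j 1 ↔ b.1 = m + Pi.single i 1 := by
      rw [hm, add_right_comm, add_left_inj, eq_comm]
    by_cases hb : b.1 = m + Pi.single i 1
    · rw [if_pos hb, if_pos (hiff.2 hb), hm, hb, mul_comm]
      simp [amp, hij, hij.symm]
    · rw [if_neg hb, if_neg (fun h => hb (hiff.1 h))]

lemma amp_mul_self {N : ℕ} {lam a : Fin N → ℕ} {i : Fin N} (h : a i ≤ lam i) :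
    amp lam a i * amp lam a i = ((lam i : ℝ) - a i) * ((a i : ℝ) + 1) := by
  have h' : (a i : ℝ) ≤ lam i := by exact_mod_cast h
  exact Real.mul_self_sqrt (mul_nonneg (by linarith) (by positivity))

lemma raise_sub_lower {N : ℕ} (lam : Fin N → ℕ) (t : ℤ) (a b : bddTuples N lam t)
    (i : Fin N) :
    raiseTerm lam t a.1 b.1 i i - lowerTerm lam t a.1 b.1 i i =
      if a = b then (lam i : ℝ) - 2 * a.1 i else 0 := by
  rw [raiseTerm_eq]
  simp only [add_left_inj, ← Subtype.ext_iff]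
  by_cases h0 : a.1 i = 0
  · rw [lowerTerm_of_zero _ _ _ _ _ _ h0]
    by_cases hab : a = b
    · subst hab
      rw [if_pos rfl, if_pos rfl, amp_mul_self (a.2.1 i), h0]
      simp
    · simp [hab]
  · obtain ⟨m, hm⟩ := exists_eq_add_single a.1 i h0
    rw [lowerTerm_of_eq lam t a b i i m hm, ← hm]
    by_cases hab : a = b
    · subst hab
      have hai : a.1 i = m i + 1 := by simpa using congrFun hm i
      have hle := a.2.1 i
      rw [if_pos rfl, if_pos rfl, if_pos rfl, amp_mul_self hle, amp_mul_self (by omega), hai]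
      push_cast
      ring
    · rw [if_neg hab, if_neg (fun h => hab (Subtype.ext h.symm)), if_neg hab, sub_zero]

/-- Properties of the ladder matrices for `SU(2)`/`SO(3)` (with `t = 2K`):
`(B^−_K)ᵀ = −B^+_{K−1}` and `(B^+_K)ᵀ B^+_K − (B^−_K)ᵀ B^−_K = −2K · I`. -/
theorem stmt3 (N : ℕ) (hN : 1 ≤ N) (lam : Fin N → ℕ) (t : ℤ) :
    ((ladderBminus N lam (t - 2) t).transpose = -ladderBplus N lam t (t - 2)) ∧
    ((ladderBplus N lam (t + 2) t).transpose * ladderBplus N lam (t + 2) t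
        - (ladderBminus N lam (t - 2) t).transpose * ladderBminus N lam (t - 2) t
      = (-(t : ℝ)) • (1 : Matrix (bddTuples N lam t) (bddTuples N lam t) ℝ)) := by
  constructor
  · ext a m
    rw [Matrix.transpose_apply, ladderBminus_apply, Matrix.neg_apply, ladderBplus_apply]
  · ext a b
    have hplus : ((ladderBplus N lam (t + 2) t).transpose * ladderBplus N lam (t + 2) t) a b =
        ∑ i, ∑ j, raiseTerm lam t a.1 b.1 i j := by
      simp only [Matrix.mul_apply, Matrix.transpose_apply, ladderBplus_apply,
        Finset.sum_mul_sum, raiseTerm]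
      rw [Finset.sum_comm]
      exact Finset.sum_congr rfl fun i _ => Finset.sum_comm
    have hminus : ((ladderBminus N lam (t - 2) t).transpose * ladderBminus N lam (t - 2) t) a b =
        ∑ i, ∑ j, lowerTerm lam t a.1 b.1 j i := by
      simp only [Matrix.mul_apply, Matrix.transpose_apply, ladderBminus_apply, neg_mul_neg,
        Finset.sum_mul_sum, lowerTerm]
      rw [Finset.sum_comm]
      refine (Finset.sum_congr rfl fun i _ => Finset.sum_comm).trans ?_
      exact Finset.sum_comm
    have hrow : ∀ i, ∑ j, (raiseTerm lam t a.1 b.1 i j - lowerTerm lam t a.1 b.1 j i) =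
        if a = b then (lam i : ℝ) - 2 * a.1 i else 0 := by
      intro i
      rw [← raise_sub_lower, Finset.sum_eq_single i]
      · intro j _ hj
        rw [raise_eq_lower lam t a b hj.symm, sub_self]
      · simp
    rw [Matrix.sub_apply, hplus, hminus, ← Finset.sum_sub_distrib]
    simp only [← Finset.sum_sub_distrib, hrow]
    rw [Matrix.smul_apply, Matrix.one_apply]
    by_cases hab : a = b
    · simp only [if_pos hab, Finset.sum_sub_distrib, ← Finset.mul_sum, smul_eq_mul, mul_one]
      have h : 2 * (∑ i, (a.1 i : ℝ)) = (∑ i, (lam i : ℝ)) + t := by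
        exact_mod_cast congrArg (Int.cast : ℤ → ℝ) a.2.2
      linarith
    · simp [hab]
end

section
/- Fix an integer N ≥ 1 and nonnegative half-integers l_1, …, l_N (i.e. 2l_i ∈ ℕ). Let M_l := {m = (m_1, …, m_N) : l_i + m_i ∈ {0, 1, …, 2l_i} for every i}, and for a half-integer K let M_{l,K} := {m ∈ M_l : Σ_i m_i = K}. For m ∈ M_l and 1 ≤ j ≤ N, m_j^± denotes the tuple obtained from m by replacing m_j with m_j ± 1. Fix additionally a nonnegative half-integer L (2L ∈ ℕ) with L + Σ_i l_i ∈ ℤ, set M_L := {k : L + k ∈ {0, 1, …, 2L}}, and let Col := {m ∈ M_l : −L ≤ Σ_i m_i ≤ L}. Define the real matrix M₂ with rows indexed by pairs (m, k) ∈ M_l × M_L and columns indexed by m' ∈ Col, whose entry in row (m, k) and column m' equals: √((L + Σm + 1)(L − Σm)) if m' = m and k = Σm + 1; −√((L − Σm + 1)(L + Σm)) if m' = m and k = Σm − 1; −√((l_j + m_j + 1)(l_j − m_j)) if m' = m_j^+ for some j and k = Σm + 1; √((l_j − m_j + 1)(l_j + m_j)) if m' = m_j^− for some j and k = Σm − 1;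 and 0 otherwise (here Σm := Σ_i m_i). Let M₂⁻ be the submatrix of M₂ formed by the rows (m, k) with k = Σm + 1, and M₂⁺ the submatrix formed by the rows (m, k) with k = Σm − 1. Then for every vector c : Col → ℝ, the following are equivalent: M₂ · c = 0, M₂⁻ · c = 0, M₂⁺ · c = 0; in other words ker M₂ = ker M₂⁻ = ker M₂⁺. -/
/-!
Extend a column vector `c` by zero to a finitely supported function `f` on all of `ℤ^N`.
Points `m` of `ℤ^N` stand for the shifted coordinates `l_i + m_i` of a tuple. Then the rows of `M₂⁻` and `M₂⁺` say that
`X = 0` and `Y = 0`, where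
`X(m) = A(m) f(m) - ∑_j a_j(m) f(m + e_j)` and
`Y(m) = A(m - e_j) f(m) - ∑_j a_j(m - e_j) f(m - e_j)`;
here `A` depends on the coordinate sum only, so that `A(m - e_j)` does not depend on `j`.
At points which index no row, these expressions vanish automatically; this uses the parity
hypothesis (`exists_row`, `xPart_eq_zero_of_no_row`, `yPart_eq_zero_of_no_row`).

The kernels agree because `∑ X² = ∑ Y²`, the quadratic form version of
`(M₂⁻)ᵀ M₂⁻ = (M₂⁺)ᵀ M₂⁺`. To see this, `X² - Y²` is written as a sum of differences
`h(m + v) - h(m)` with `h` finitely supported (`hasSum_sq_sub_sq`). The off-diagonal terms match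
because `a_j` depends on the `j`-th coordinate only, and the diagonal terms match because
`A(m)² - A(m - e_j)²` and `∑_j (a_j(m)² - a_j(m - e_j)²)` both equal minus twice the magnetic sum
(in the shifted coordinates `∑_j λ_j - 2 ∑_j m_j`) on the support of `f` (`diag_identity`).
-/

/-- The set `M_l` of tuples `m` with `l_i + m_i ∈ {0,…,2l_i}`, encoded via the natural
numbers `λ_i = 2 l_i` and `μ_i = l_i + m_i`. -/
abbrev MTuples (N : ℕ) (lam : Fin N → ℕ) : Type :=
  {μ : Fin N → ℕ // ∀ i, μ i ≤ lam i}

noncomputable instance (N : ℕ) (lam : Fin N → ℕ) : Fintype (MTuples N lam) := by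
  have h : {μ : Fin N → ℕ | ∀ i, μ i ≤ lam i}.Finite := by
    apply Set.Finite.subset (Set.Finite.pi fun i : Fin N => Set.finite_Iic (lam i))
    intro μ hμ
    rw [Set.mem_pi]
    intro i _
    exact hμ i
  exact h.fintype

/-- Twice the coordinate sum `Σ_i m_i` of the tuple encoded by `μ`:  `2 Σ m = 2 Σ μ − Σ λ`. -/
def twoSum (N : ℕ) (lam : Fin N → ℕ) (μ : MTuples N lam) : ℤ :=
  2 * (∑ i, (μ.1 i : ℤ)) - ∑ i, (lam i : ℤ)

/-- The column index set `Col = {m ∈ M_l : −L ≤ Σ_i m_i ≤ L}` (with `Λ = 2L`). -/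
abbrev ColTuples (N : ℕ) (lam : Fin N → ℕ) (Lam : ℕ) : Type :=
  {μ : MTuples N lam // -(Lam : ℤ) ≤ twoSum N lam μ ∧ twoSum N lam μ ≤ (Lam : ℤ)}

/-- The matrix `M₂` (β-derivative block of the equivariance system) with rows indexed by
pairs `(m, k) ∈ M_l × M_L` (where `k ∈ M_L` is encoded by `κ ∈ Fin (Λ+1)` via `k = κ − L`,
so `2k = 2κ − Λ`) and columns indexed by `m' ∈ Col`.  Its entry is
`√((L+Σm+1)(L−Σm))` if `m' = m ∧ k = Σm+1`; `−√((L−Σm+1)(L+Σm))` if `m' = m ∧ k = Σm−1`;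
`−√((l_j+m_j+1)(l_j−m_j))` if `m' = m_j^+ ∧ k = Σm+1`;
`√((l_j−m_j+1)(l_j+m_j))` if `m' = m_j^− ∧ k = Σm−1`; and `0` otherwise.
The four branches are mutually exclusive, so the sum of guarded terms below realizes
exactly this case distinction. -/
noncomputable def M2mat (N : ℕ) (lam : Fin N → ℕ) (Lam : ℕ) :
    Matrix (MTuples N lam × Fin (Lam + 1)) (ColTuples N lam Lam) ℝ :=
  Matrix.of fun r μ' =>
    (if μ'.1.1 = r.1.1 ∧ 2 * ((r.2 : ℕ) : ℤ) - (Lam : ℤ) = twoSum N lam r.1 + 2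
      then Real.sqrt ((((Lam : ℝ) + (twoSum N lam r.1 : ℝ)) / 2 + 1) *
        (((Lam : ℝ) - (twoSum N lam r.1 : ℝ)) / 2)) else 0)
    + (if μ'.1.1 = r.1.1 ∧ 2 * ((r.2 : ℕ) : ℤ) - (Lam : ℤ) = twoSum N lam r.1 - 2
      then -Real.sqrt ((((Lam : ℝ) - (twoSum N lam r.1 : ℝ)) / 2 + 1) *
        (((Lam : ℝ) + (twoSum N lam r.1 : ℝ)) / 2)) else 0)
    + (∑ j : Fin N,
        if μ'.1.1 = Function.update r.1.1 j (r.1.1 j + 1) ∧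
            2 * ((r.2 : ℕ) : ℤ) - (Lam : ℤ) = twoSum N lam r.1 + 2
        then -Real.sqrt (((r.1.1 j : ℝ) + 1) * ((lam j : ℝ) - (r.1.1 j : ℝ))) else 0)
    + (∑ j : Fin N,
        if μ'.1.1 = Function.update r.1.1 j (r.1.1 j - 1) ∧ r.1.1 j ≠ 0 ∧
            2 * ((r.2 : ℕ) : ℤ) - (Lam : ℤ) = twoSum N lam r.1 - 2
        then Real.sqrt (((lam j : ℝ) - (r.1.1 j : ℝ) + 1) * (r.1.1 j : ℝ)) else 0)

/-- The submatrix `M₂⁻` of `M₂` formed by the rows `(m, k)` with `k = Σm + 1`. -/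
noncomputable def M2minus (N : ℕ) (lam : Fin N → ℕ) (Lam : ℕ) :
    Matrix {r : MTuples N lam × Fin (Lam + 1) //
        2 * ((r.2 : ℕ) : ℤ) - (Lam : ℤ) = twoSum N lam r.1 + 2}
      (ColTuples N lam Lam) ℝ :=
  Matrix.of fun r μ' => M2mat N lam Lam r.1 μ'

/-- The submatrix `M₂⁺` of `M₂` formed by the rows `(m, k)` with `k = Σm − 1`. -/
noncomputable def M2plus (N : ℕ) (lam : Fin N → ℕ) (Lam : ℕ) :
    Matrix {r : MTuples N lam × Fin (Lam + 1) //
        2 * ((r.2 : ℕ) : ℤ) - (Lam : ℤ) = twoSum N lam r.1 - 2}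
      (ColTuples N lam Lam) ℝ :=
  Matrix.of fun r μ' => M2mat N lam Lam r.1 μ'

namespace CouplingKernel

variable {N : ℕ}

/-! ### The two halves of the system on `ℤ^N` -/

/-- The unit vector `e_j`. -/
def unitVec (j : Fin N) : Fin N → ℤ := Pi.single j 1

/-- The integer extension of `twoSum`: twice the magnetic sum, `2 Σ μ - Σ λ`. -/
def weight (lam : Fin N → ℕ) (m : Fin N → ℤ) : ℤ :=
  2 * (∑ i, m i) - ∑ i, (lam i : ℤ)

/-- The ladder coefficient `√((L+k+1)(L-k))` at `k = t/2`, with `Λ = 2L`. -/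
noncomputable def coefA (Lam : ℕ) (t : ℤ) : ℝ :=
  Real.sqrt ((((Lam : ℝ) + (t : ℝ)) / 2 + 1) * (((Lam : ℝ) - (t : ℝ)) / 2))

/-- The ladder coefficient `√((l_j+m_j+1)(l_j-m_j))` in the coordinate `x = l_j + m_j`.
It vanishes for every integer `x` outside `[0, λ_j)`. -/
noncomputable def coefB (lam : Fin N → ℕ) (j : Fin N) (x : ℤ) : ℝ :=
  Real.sqrt (((x : ℝ) + 1) * ((lam j : ℝ) - (x : ℝ)))

/-- The left-hand side of the row `(m, Σm + 1)` of the system. -/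
noncomputable def xPart (lam : Fin N → ℕ) (Lam : ℕ) (f : (Fin N → ℤ) → ℝ)
    (m : Fin N → ℤ) : ℝ :=
  coefA Lam (weight lam m) * f m - ∑ j, coefB lam j (m j) * f (m + unitVec j)

/-- Minus the left-hand side of the row `(m, Σm - 1)` of the system. -/
noncomputable def yPart (lam : Fin N → ℕ) (Lam : ℕ) (f : (Fin N → ℤ) → ℝ)
    (m : Fin N → ℤ) : ℝ :=
  coefA Lam (weight lam m - 2) * f m - ∑ j, coefB lam j (m j - 1) * f (m - unitVec j)

lemma weight_sub (lam : Fin N → ℕ) (m : Fin N → ℤ) (j : Fin N) :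
    weight lam (m - unitVec j) = weight lam m - 2 := by
  simp [weight, unitVec, Finset.sum_sub_distrib]
  ring

lemma weight_add (lam : Fin N → ℕ) (m : Fin N → ℤ) (j : Fin N) :
    weight lam (m + unitVec j) = weight lam m + 2 := by
  simp [weight, unitVec, Finset.sum_add_distrib]
  ring

/-! ### Equality of the quadratic forms -/

lemma hasSum_shift_sub {h : (Fin N → ℤ) → ℝ} (hh : h.support.Finite) (v : Fin N → ℤ) :
    HasSum (fun m => h m - h (m - v)) 0 := by
  have hs : Summable h := summable_of_hasFiniteSupport hh
  have h1 := hs.hasSum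
  have h2 : HasSum (fun m => h (m - v)) (∑' m, h m) :=
    (Equiv.subRight v).hasSum_iff.mpr h1
  simpa using h1.sub h2

lemma finite_support_mul_shift {f : (Fin N → ℤ) → ℝ} (hf : f.support.Finite)
    (g : (Fin N → ℤ) → ℝ) (v : Fin N → ℤ) :
    (Function.support fun m => g m * f (m + v)).Finite := by
  refine (hf.preimage (f := fun m => m + v) (fun a _ b _ h => add_right_cancel h)).subset ?_
  intro m hm
  simp only [Function.mem_support] at hm
  exact right_ne_zero_of_mul hm

/-- `f` vanishes outside the box `0 ≤ m_i ≤ λ_i` and outside the strip `|weight| ≤ Λ`. -/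
def SuppIn (lam : Fin N → ℕ) (Lam : ℕ) (f : (Fin N → ℤ) → ℝ) : Prop :=
  ∀ m, f m ≠ 0 → (∀ i, 0 ≤ m i ∧ m i ≤ lam i) ∧
    -(Lam : ℤ) ≤ weight lam m ∧ weight lam m ≤ Lam

lemma SuppIn.finite {lam : Fin N → ℕ} {Lam : ℕ} {f : (Fin N → ℤ) → ℝ}
    (hf : SuppIn lam Lam f) : f.support.Finite := by
  refine (Set.finite_Icc (0 : Fin N → ℤ) (fun i => (lam i : ℤ))).subset ?_
  intro m hm
  have h := (hf m hm).1
  exact ⟨fun i => (h i).1, fun i => (h i).2⟩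

/-- The diagonal ladder identity: on the support of `f` the difference of the squared
coefficients is `-weight` on both sides, up to the factor `f(m)²`. -/
lemma diag_identity {lam : Fin N → ℕ} {Lam : ℕ} {f : (Fin N → ℤ) → ℝ}
    (hf : SuppIn lam Lam f) (m : Fin N → ℤ) :
    (coefA Lam (weight lam m) * f m) ^ 2 - (coefA Lam (weight lam m - 2) * f m) ^ 2 =
      ∑ j, ((coefB lam j (m j) * f m) ^ 2 - (coefB lam j (m j - 1) * f m) ^ 2) := by
  by_cases h0 : f m = 0
  · simp [h0]
  obtain ⟨hb, h1, h2⟩ := hf m h0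
  have h1' : -(Lam : ℝ) ≤ (weight lam m : ℝ) := by exact_mod_cast h1
  have h2' : (weight lam m : ℝ) ≤ (Lam : ℝ) := by exact_mod_cast h2
  have hA : coefA Lam (weight lam m) ^ 2 =
      (((Lam : ℝ) + weight lam m) / 2 + 1) * (((Lam : ℝ) - weight lam m) / 2) := by
    rw [coefA, Real.sq_sqrt]
    apply mul_nonneg <;> linarith
  have hB : coefA Lam (weight lam m - 2) ^ 2 =
      (((Lam : ℝ) + weight lam m) / 2) * (((Lam : ℝ) - weight lam m) / 2 + 1) := by
    rw [coefA, Real.sq_sqrt]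
    · push_cast; ring
    · push_cast
      apply mul_nonneg <;> linarith
  have hj : ∀ j, (coefB lam j (m j) * f m) ^ 2 - (coefB lam j (m j - 1) * f m) ^ 2 =
      ((lam j : ℝ) - 2 * (m j : ℝ)) * f m ^ 2 := by
    intro j
    have hl : (0 : ℝ) ≤ (m j : ℝ) := by exact_mod_cast (hb j).1
    have hu : (m j : ℝ) ≤ (lam j : ℝ) := by exact_mod_cast (hb j).2
    rw [mul_pow, mul_pow, coefB, coefB, Real.sq_sqrt, Real.sq_sqrt]
    · push_cast; ring
    · push_cast
      apply mul_nonneg <;> linarith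
    · apply mul_nonneg <;> linarith
  simp only [hj]
  rw [← Finset.sum_mul, mul_pow, mul_pow, hA, hB]
  have hw : (weight lam m : ℝ) = 2 * (∑ i, (m i : ℝ)) - ∑ i, (lam i : ℝ) := by
    simp [weight]
  rw [Finset.sum_sub_distrib, ← Finset.mul_sum]
  have : (∑ i, (lam i : ℝ)) - 2 * (∑ i, (m i : ℝ)) = - (weight lam m : ℝ) := by
    rw [hw]; ring
  rw [this]
  ring

/-- The quadratic-form version of `(M₂⁻)ᵀ M₂⁻ = (M₂⁺)ᵀ M₂⁺`. -/
lemma hasSum_sq_sub_sq {lam : Fin N → ℕ} {Lam : ℕ} {f : (Fin N → ℤ) → ℝ}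
    (hf : SuppIn lam Lam f) :
    HasSum (fun m => xPart lam Lam f m ^ 2 - yPart lam Lam f m ^ 2) 0 := by
  have hfin := hf.finite
  -- `p`: mixed terms; `q`: products of two ladder terms; `u`, `w`: diagonal terms.
  let p : Fin N → (Fin N → ℤ) → ℝ := fun j m =>
    (coefA Lam (weight lam m) * f m * coefB lam j (m j)) * f (m + unitVec j)
  let q : Fin N → Fin N → (Fin N → ℤ) → ℝ := fun j k m =>
    (coefB lam j (m j) * coefB lam k (m k) * f (m + unitVec j)) * f (m + unitVec k)
  let u : Fin N → (Fin N → ℤ) → ℝ := fun j m => (coefB lam j (m j) ^ 2 * f (m + unitVec j)) *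
    f (m + unitVec j)
  let w : Fin N → (Fin N → ℤ) → ℝ := fun j m => (coefB lam j (m j) ^ 2 * f (m + 0)) * f (m + 0)
  have hp : ∀ j, HasSum (fun m => p j m - p j (m - unitVec j)) 0 := fun j =>
    hasSum_shift_sub (finite_support_mul_shift hfin _ _) _
  have hu : ∀ j, HasSum (fun m => u j m - u j (m - unitVec j)) 0 := fun j =>
    hasSum_shift_sub (finite_support_mul_shift hfin _ _) _
  have hw : ∀ j, HasSum (fun m => w j m - w j (m - unitVec j)) 0 := fun j =>
    hasSum_shift_sub (finite_support_mul_shift hfin _ _) _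
  have hq : ∀ j k, HasSum (fun m => q j k m - q j k (m - (unitVec j + unitVec k))) 0 :=
    fun j k => hasSum_shift_sub (finite_support_mul_shift hfin _ _) _
  have hP := hasSum_sum (s := Finset.univ) (fun j _ => hp j)
  have hD := hasSum_sum (s := Finset.univ) (fun j (_ : j ∈ Finset.univ) => (hu j).add (hw j))
  have hQ := hasSum_sum (s := Finset.univ) (fun j (_ : j ∈ Finset.univ) =>
    hasSum_sum (s := Finset.univ.erase j) (fun k _ => hq j k))
  have hT := ((hP.mul_left (-2)).add hD).add hQ
  simp only [add_zero, Finset.sum_const_zero, mul_zero] at hT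
  refine (congrArg (HasSum · 0) (funext fun m => ?_)).mpr hT
  -- Values of the shifted terms.
  have hp' : ∀ j, p j (m - unitVec j) =
      coefA Lam (weight lam m - 2) * f m * (coefB lam j (m j - 1) * f (m - unitVec j)) := by
    intro j
    simp only [p, weight_sub, sub_add_cancel, Pi.sub_apply]
    simp only [unitVec, Pi.single_eq_same]
    ring
  have hu' : ∀ j, u j (m - unitVec j) = (coefB lam j (m j - 1) * f m) ^ 2 := by
    intro j
    simp only [u, sub_add_cancel, Pi.sub_apply]
    simp only [unitVec, Pi.single_eq_same]
    ring
  have hw' : ∀ j, w j (m - unitVec j) = (coefB lam j (m j - 1) * f (m - unitVec j)) ^ 2 := by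
    intro j
    simp only [w, add_zero, Pi.sub_apply]
    simp only [unitVec, Pi.single_eq_same]
    ring
  have hq' : ∀ j, ∀ k ∈ Finset.univ.erase j, q j k (m - (unitVec j + unitVec k)) =
      (coefB lam j (m j - 1) * f (m - unitVec j)) *
        (coefB lam k (m k - 1) * f (m - unitVec k)) := by
    intro j k hk
    have hkj : k ≠ j := Finset.ne_of_mem_erase hk
    have e1 : m - (unitVec j + unitVec k) + unitVec j = m - unitVec k := by abel
    have e2 : m - (unitVec j + unitVec k) + unitVec k = m - unitVec j := by abel
    have e3 : (m - (unitVec j + unitVec k)) j = m j - 1 := by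
      simp [unitVec, hkj.symm]
    have e4 : (m - (unitVec j + unitVec k)) k = m k - 1 := by
      simp [unitVec, hkj]
    simp only [q, e1, e2, e3, e4]
    ring
  -- Both squared ladder sums, split into diagonal and off-diagonal parts.
  have hsq : ∀ g : Fin N → ℝ, (∑ j, g j) ^ 2 =
      ∑ j, g j ^ 2 + ∑ j, ∑ k ∈ Finset.univ.erase j, g j * g k := by
    intro g
    rw [sq, Finset.sum_mul_sum, ← Finset.sum_add_distrib]
    refine Finset.sum_congr rfl fun j _ => ?_
    rw [← Finset.add_sum_erase _ _ (Finset.mem_univ j), sq]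
  have hQ' : ∑ j, ∑ k ∈ Finset.univ.erase j, (q j k m - q j k (m - (unitVec j + unitVec k))) =
      (∑ j, coefB lam j (m j) * f (m + unitVec j)) ^ 2
        - ∑ j, (coefB lam j (m j) * f (m + unitVec j)) ^ 2
      - ((∑ j, coefB lam j (m j - 1) * f (m - unitVec j)) ^ 2
        - ∑ j, (coefB lam j (m j - 1) * f (m - unitVec j)) ^ 2) := by
    rw [hsq, hsq, add_sub_cancel_left, add_sub_cancel_left, ← Finset.sum_sub_distrib]
    refine Finset.sum_congr rfl fun j _ => ?_
    rw [← Finset.sum_sub_distrib]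
    refine Finset.sum_congr rfl fun k hk => ?_
    rw [hq' j k hk]
    simp only [q]
    ring
  have hP' : ∑ j, (p j m - p j (m - unitVec j)) =
      coefA Lam (weight lam m) * f m * (∑ j, coefB lam j (m j) * f (m + unitVec j))
      - coefA Lam (weight lam m - 2) * f m *
        (∑ j, coefB lam j (m j - 1) * f (m - unitVec j)) := by
    rw [Finset.mul_sum, Finset.mul_sum, ← Finset.sum_sub_distrib]
    refine Finset.sum_congr rfl fun j _ => ?_
    rw [hp']
    simp only [p]
    ring
  have hD' : ∑ j, (u j m - u j (m - unitVec j) + (w j m - w j (m - unitVec j))) =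
      ∑ j, (coefB lam j (m j) * f (m + unitVec j)) ^ 2
      - ∑ j, (coefB lam j (m j - 1) * f (m - unitVec j)) ^ 2
      + ((coefA Lam (weight lam m) * f m) ^ 2
        - (coefA Lam (weight lam m - 2) * f m) ^ 2) := by
    rw [diag_identity hf, ← Finset.sum_sub_distrib, ← Finset.sum_add_distrib]
    refine Finset.sum_congr rfl fun j _ => ?_
    rw [hu', hw']
    simp only [u, w, add_zero]
    ring
  rw [hQ', hP', hD', xPart, yPart]
  ring

lemma xPart_eq_zero_iff_yPart_eq_zero {lam : Fin N → ℕ} {Lam : ℕ} {f : (Fin N → ℤ) → ℝ}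
    (hf : SuppIn lam Lam f) :
    (∀ m, xPart lam Lam f m = 0) ↔ ∀ m, yPart lam Lam f m = 0 := by
  have h := hasSum_sq_sub_sq hf
  constructor
  · intro hx m
    have h' : HasSum (fun m => yPart lam Lam f m ^ 2) 0 := by
      simpa [hx] using h.neg
    have := congrFun ((hasSum_zero_iff_of_nonneg fun m => sq_nonneg _).mp h') m
    simpa using this
  · intro hy m
    have h' : HasSum (fun m => xPart lam Lam f m ^ 2) 0 := by
      simpa [hy] using h
    have := congrFun ((hasSum_zero_iff_of_nonneg fun m => sq_nonneg _).mp h') m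
    simpa using this

/-! ### Rows of `M₂` in terms of the extension by zero -/

/-- A natural tuple regarded as an integer tuple. -/
def toInt (μ : Fin N → ℕ) : Fin N → ℤ := fun i => (μ i : ℤ)

lemma toInt_injective : Function.Injective (toInt (N := N)) := by
  intro a b h
  funext i
  exact Int.ofNat_inj.mp (congrFun h i)

lemma weight_toInt (lam : Fin N → ℕ) (μ : MTuples N lam) :
    weight lam (toInt μ.1) = twoSum N lam μ := rfl

/-- The extension by zero of a column vector to `ℤ^N`. -/
noncomputable def extend {lam : Fin N → ℕ} {Lam : ℕ} (c : ColTuples N lam Lam → ℝ)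
    (m : Fin N → ℤ) : ℝ :=
  ∑ μ, if toInt μ.1.1 = m then c μ else 0

lemma suppIn_extend {lam : Fin N → ℕ} {Lam : ℕ} (c : ColTuples N lam Lam → ℝ) :
    SuppIn lam Lam (extend c) := by
  intro m hm
  obtain ⟨μ, -, hμ⟩ := Finset.exists_ne_zero_of_sum_ne_zero hm
  have h : toInt μ.1.1 = m := by
    by_contra h
    simp [h] at hμ
  subst h
  refine ⟨fun i => ⟨Int.natCast_nonneg _, ?_⟩, μ.2⟩
  exact Int.ofNat_le.mpr (μ.1.2 i)

lemma eq_update_succ_iff (ν μ : Fin N → ℕ) (j : Fin N) :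
    ν = Function.update μ j (μ j + 1) ↔ toInt ν = toInt μ + unitVec j := by
  rw [← toInt_injective.eq_iff]
  have : toInt (Function.update μ j (μ j + 1)) = toInt μ + unitVec j := by
    funext i
    by_cases h : i = j
    · subst h; simp [toInt, unitVec]
    · simp [toInt, unitVec, h]
  rw [this]

/-- The guard `μ j ≠ 0` compensates for truncated subtraction. -/
lemma eq_update_pred_iff (ν μ : Fin N → ℕ) (j : Fin N) :
    (ν = Function.update μ j (μ j - 1) ∧ μ j ≠ 0) ↔ toInt ν = toInt μ - unitVec j := by
  constructor
  · rintro ⟨rfl, h0⟩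
    funext i
    by_cases h : i = j
    · subst h
      simp [toInt, unitVec]
      omega
    · simp [toInt, unitVec, h]
  · intro h
    have hj := congrFun h j
    simp [toInt, unitVec] at hj
    refine ⟨?_, by omega⟩
    funext i
    by_cases hi : i = j
    · subst hi
      simp
      omega
    · have := congrFun h i
      simp [toInt, unitVec, hi] at this
      simp [hi, this]

lemma mulVec_row {lam : Fin N → ℕ} {Lam : ℕ} (c : ColTuples N lam Lam → ℝ)
    (r : MTuples N lam × Fin (Lam + 1)) :
    (M2mat N lam Lam).mulVec c r =
      (if 2 * ((r.2 : ℕ) : ℤ) - (Lam : ℤ) = twoSum N lam r.1 + 2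
        then xPart lam Lam (extend c) (toInt r.1.1) else 0)
      - (if 2 * ((r.2 : ℕ) : ℤ) - (Lam : ℤ) = twoSum N lam r.1 - 2
        then yPart lam Lam (extend c) (toInt r.1.1) else 0) := by
  have hA : Real.sqrt ((((Lam : ℝ) - (twoSum N lam r.1 : ℝ)) / 2 + 1) *
        (((Lam : ℝ) + (twoSum N lam r.1 : ℝ)) / 2)) = coefA Lam (twoSum N lam r.1 - 2) := by
    rw [coefA]
    congr 1
    push_cast
    ring
  have hB : ∀ j, Real.sqrt (((lam j : ℝ) - (r.1.1 j : ℝ) + 1) * (r.1.1 j : ℝ)) =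
      coefB lam j (toInt r.1.1 j - 1) := by
    intro j
    rw [coefB]
    congr 1
    simp only [toInt]
    push_cast
    ring
  have hC : ∀ j, Real.sqrt (((r.1.1 j : ℝ) + 1) * ((lam j : ℝ) - (r.1.1 j : ℝ))) =
      coefB lam j (toInt r.1.1 j) := by
    intro j
    simp [coefB, toInt]
  have hE : Real.sqrt ((((Lam : ℝ) + (twoSum N lam r.1 : ℝ)) / 2 + 1) *
        (((Lam : ℝ) - (twoSum N lam r.1 : ℝ)) / 2)) = coefA Lam (twoSum N lam r.1) := rfl
  -- Pulls a coefficient through the sum that defines `extend c`.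
  have key : ∀ (x : ℝ) (m : Fin N → ℤ),
      ∑ μ : ColTuples N lam Lam, (if toInt μ.1.1 = m then x else 0) * c μ = x * extend c m := by
    intro x m
    rw [extend, Finset.mul_sum]
    refine Finset.sum_congr rfl fun μ _ => ?_
    split_ifs <;> simp
  simp only [Matrix.mulVec, dotProduct, M2mat, Matrix.of_apply, hA, hB, hC, hE,
    eq_update_succ_iff, ← and_assoc, eq_update_pred_iff, ← toInt_injective.eq_iff (b := r.1.1)]
  by_cases h1 : 2 * ((r.2 : ℕ) : ℤ) - (Lam : ℤ) = twoSum N lam r.1 + 2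
  · have h2 : ¬ (2 * ((r.2 : ℕ) : ℤ) - (Lam : ℤ) = twoSum N lam r.1 - 2) := by omega
    simp only [h1, and_true, if_true]
    have h3 : ¬ (twoSum N lam r.1 + 2 = twoSum N lam r.1 - 2) := by omega
    simp only [h3, and_false, if_false, Finset.sum_const_zero, add_zero, sub_zero, add_mul,
      Finset.sum_add_distrib, Finset.sum_mul]
    rw [Finset.sum_comm]
    simp only [key, xPart, weight_toInt, neg_mul, Finset.sum_neg_distrib]
    ring
  · by_cases h2 : 2 * ((r.2 : ℕ) : ℤ) - (Lam : ℤ) = twoSum N lam r.1 - 2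
    · have h3 : ¬ (twoSum N lam r.1 - 2 = twoSum N lam r.1 + 2) := by omega
      simp only [h2, and_true, if_true]
      simp only [h3, and_false, if_false, Finset.sum_const_zero, add_zero, zero_add, zero_sub,
        add_mul, Finset.sum_add_distrib, Finset.sum_mul]
      rw [Finset.sum_comm]
      simp only [key, yPart, weight_toInt, neg_mul]
      ring
    · simp [h1, h2]

/-! ### Points that index no row -/

lemma coefB_eq_zero (lam : Fin N → ℕ) (j : Fin N) (x : ℤ) (h : x < 0 ∨ (lam j : ℤ) ≤ x) :
    coefB lam j x = 0 := by
  rw [coefB]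
  apply Real.sqrt_eq_zero_of_nonpos
  rcases h with h | h
  · have h1 : (x : ℝ) + 1 ≤ 0 := by exact_mod_cast (by omega : x + 1 ≤ 0)
    have h2 : (0 : ℝ) ≤ (lam j : ℝ) := by positivity
    apply mul_nonpos_of_nonpos_of_nonneg h1
    linarith
  · have h1 : (lam j : ℝ) ≤ (x : ℝ) := by exact_mod_cast h
    have h2 : (0 : ℝ) ≤ (lam j : ℝ) := by positivity
    apply mul_nonpos_of_nonneg_of_nonpos <;> linarith

lemma coefA_self (Lam : ℕ) : coefA Lam Lam = 0 := by simp [coefA]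

lemma coefA_neg (Lam : ℕ) : coefA Lam (-(Lam : ℤ) - 2) = 0 := by
  have : ((Lam : ℝ) + ((-(Lam : ℤ) - 2 : ℤ) : ℝ)) / 2 + 1 = 0 := by
    push_cast; ring
  rw [coefA, this]
  simp

/-- Parity makes every half-integer `k` of modulus at most `L` that can occur next to `Σm`
an element of `M_L`. -/
lemma exists_row {lam : Fin N → ℕ} {Lam : ℕ} (hpar : Even (Lam + ∑ i, lam i))
    (m : Fin N → ℤ) (t : ℤ) (ht : t = weight lam m + 2 ∨ t = weight lam m - 2)
    (h1 : -(Lam : ℤ) ≤ t) (h2 : t ≤ Lam) :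
    ∃ κ : Fin (Lam + 1), 2 * ((κ : ℕ) : ℤ) - (Lam : ℤ) = t := by
  obtain ⟨s, hs⟩ := hpar
  have hs' : (Lam : ℤ) + ∑ i, (lam i : ℤ) = s + s := by exact_mod_cast hs
  simp only [weight] at ht
  generalize ∑ i, (lam i : ℤ) = y at *
  generalize ∑ i, m i = z at *
  refine ⟨⟨((t + Lam) / 2).toNat, by omega⟩, ?_⟩
  simp only
  omega

lemma xPart_eq_zero_of_no_row {lam : Fin N → ℕ} {Lam : ℕ} {f : (Fin N → ℤ) → ℝ}
    (hf : SuppIn lam Lam f) (hpar : Even (Lam + ∑ i, lam i)) (m : Fin N → ℤ)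
    (hm : ¬ ((∀ i, 0 ≤ m i ∧ m i ≤ lam i) ∧
      -(Lam : ℤ) ≤ weight lam m + 2 ∧ weight lam m + 2 ≤ Lam)) :
    xPart lam Lam f m = 0 := by
  have hA : coefA Lam (weight lam m) * f m = 0 := by
    by_contra h
    obtain ⟨hb, h1, h2⟩ := hf m (right_ne_zero_of_mul h)
    have h3 : ¬ (weight lam m + 2 ≤ Lam) := fun h3 => hm ⟨hb, by omega, h3⟩
    have h4 : weight lam m = Lam := by
      -- `Λ - 2 < weight ≤ Λ` and parity force `weight = Λ`.
      obtain ⟨s, hs⟩ := hpar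
      have hs' : (Lam : ℤ) + ∑ i, (lam i : ℤ) = s + s := by exact_mod_cast hs
      simp only [weight] at *
      omega
    exact h (by rw [h4, coefA_self, zero_mul])
  have hB : ∀ j, coefB lam j (m j) * f (m + unitVec j) = 0 := by
    intro j
    by_contra h
    obtain ⟨hb, h1, h2⟩ := hf _ (right_ne_zero_of_mul h)
    rw [weight_add] at h1 h2
    refine hm ⟨fun i => ?_, h1, h2⟩
    by_cases hi : i = j
    · subst hi
      by_contra hc
      exact left_ne_zero_of_mul h (coefB_eq_zero lam i (m i) (by omega))
    · have := hb i
      simpa [unitVec, hi] using this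
  simp [xPart, hA, hB]

lemma yPart_eq_zero_of_no_row {lam : Fin N → ℕ} {Lam : ℕ} {f : (Fin N → ℤ) → ℝ}
    (hf : SuppIn lam Lam f) (hpar : Even (Lam + ∑ i, lam i)) (m : Fin N → ℤ)
    (hm : ¬ ((∀ i, 0 ≤ m i ∧ m i ≤ lam i) ∧
      -(Lam : ℤ) ≤ weight lam m - 2 ∧ weight lam m - 2 ≤ Lam)) :
    yPart lam Lam f m = 0 := by
  have hA : coefA Lam (weight lam m - 2) * f m = 0 := by
    by_contra h
    obtain ⟨hb, h1, h2⟩ := hf m (right_ne_zero_of_mul h)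
    have h3 : ¬ (-(Lam : ℤ) ≤ weight lam m - 2) := fun h3 => hm ⟨hb, h3, by omega⟩
    have h4 : weight lam m = -(Lam : ℤ) := by
      obtain ⟨s, hs⟩ := hpar
      have hs' : (Lam : ℤ) + ∑ i, (lam i : ℤ) = s + s := by exact_mod_cast hs
      simp only [weight] at *
      omega
    exact h (by rw [h4, coefA_neg, zero_mul])
  have hB : ∀ j, coefB lam j (m j - 1) * f (m - unitVec j) = 0 := by
    intro j
    by_contra h
    obtain ⟨hb, h1, h2⟩ := hf _ (right_ne_zero_of_mul h)
    rw [weight_sub] at h1 h2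
    refine hm ⟨fun i => ?_, h1, h2⟩
    by_cases hi : i = j
    · subst hi
      by_contra hc
      exact left_ne_zero_of_mul h (coefB_eq_zero lam i (m i - 1) (by omega))
    · have := hb i
      simpa [unitVec, hi] using this
  simp [yPart, hA, hB]

lemma exists_toInt {lam : Fin N → ℕ} {m : Fin N → ℤ} (h : ∀ i, 0 ≤ m i ∧ m i ≤ lam i) :
    ∃ μ : MTuples N lam, toInt μ.1 = m := by
  refine ⟨⟨fun i => (m i).toNat, fun i => ?_⟩, ?_⟩
  · exact Int.toNat_le.mpr (h i).2
  · funext i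
    have := h i
    simp only [toInt]
    omega

/-! ### The kernels of `M₂⁻`, `M₂⁺` and `M₂` -/

lemma minus_iff {lam : Fin N → ℕ} {Lam : ℕ} (hpar : Even (Lam + ∑ i, lam i))
    (c : ColTuples N lam Lam → ℝ) :
    (M2minus N lam Lam).mulVec c = 0 ↔ ∀ m, xPart lam Lam (extend c) m = 0 := by
  have hrow : ∀ r, (M2minus N lam Lam).mulVec c r =
      xPart lam Lam (extend c) (toInt r.1.1.1) := by
    intro r
    have h := mulVec_row c r.1
    have h2 : ¬ (2 * ((r.1.2 : ℕ) : ℤ) - (Lam : ℤ) = twoSum N lam r.1.1 - 2) := by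
      have := r.2
      omega
    rw [if_pos r.2, if_neg h2, sub_zero] at h
    exact h
  constructor
  · intro h m
    by_cases hm : (∀ i, 0 ≤ m i ∧ m i ≤ lam i) ∧
      -(Lam : ℤ) ≤ weight lam m + 2 ∧ weight lam m + 2 ≤ Lam
    · obtain ⟨hb, h1, h2⟩ := hm
      obtain ⟨κ, hκ⟩ := exists_row hpar m _ (Or.inl rfl) h1 h2
      obtain ⟨μ, rfl⟩ := exists_toInt hb
      have := congrFun h ⟨(μ, κ), hκ⟩
      rwa [hrow] at this
    · exact xPart_eq_zero_of_no_row (suppIn_extend c) hpar m hm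
  · intro h
    funext r
    rw [hrow, h]
    rfl

lemma plus_iff {lam : Fin N → ℕ} {Lam : ℕ} (hpar : Even (Lam + ∑ i, lam i))
    (c : ColTuples N lam Lam → ℝ) :
    (M2plus N lam Lam).mulVec c = 0 ↔ ∀ m, yPart lam Lam (extend c) m = 0 := by
  have hrow : ∀ r, (M2plus N lam Lam).mulVec c r =
      -yPart lam Lam (extend c) (toInt r.1.1.1) := by
    intro r
    have h := mulVec_row c r.1
    have h2 : ¬ (2 * ((r.1.2 : ℕ) : ℤ) - (Lam : ℤ) = twoSum N lam r.1.1 + 2) := by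
      have := r.2
      omega
    rw [if_pos r.2, if_neg h2, zero_sub] at h
    exact h
  constructor
  · intro h m
    by_cases hm : (∀ i, 0 ≤ m i ∧ m i ≤ lam i) ∧
      -(Lam : ℤ) ≤ weight lam m - 2 ∧ weight lam m - 2 ≤ Lam
    · obtain ⟨hb, h1, h2⟩ := hm
      obtain ⟨κ, hκ⟩ := exists_row hpar m _ (Or.inr rfl) h1 h2
      obtain ⟨μ, rfl⟩ := exists_toInt hb
      have := congrFun h ⟨(μ, κ), hκ⟩
      rw [hrow] at this
      exact neg_eq_zero.mp this
    · exact yPart_eq_zero_of_no_row (suppIn_extend c) hpar m hm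
  · intro h
    funext r
    rw [hrow, h, neg_zero]
    rfl

/-- Rows of `M₂` that belong to neither half vanish. -/
lemma full_iff {lam : Fin N → ℕ} {Lam : ℕ} (c : ColTuples N lam Lam → ℝ) :
    (M2mat N lam Lam).mulVec c = 0 ↔
      (M2minus N lam Lam).mulVec c = 0 ∧ (M2plus N lam Lam).mulVec c = 0 := by
  constructor
  · intro h
    exact ⟨funext fun r => congrFun h r.1, funext fun r => congrFun h r.1⟩
  · rintro ⟨h1, h2⟩
    funext r
    by_cases hr1 : 2 * ((r.2 : ℕ) : ℤ) - (Lam : ℤ) = twoSum N lam r.1 + 2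
    · exact congrFun h1 ⟨r, hr1⟩
    by_cases hr2 : 2 * ((r.2 : ℕ) : ℤ) - (Lam : ℤ) = twoSum N lam r.1 - 2
    · exact congrFun h2 ⟨r, hr2⟩
    rw [mulVec_row, if_neg hr1, if_neg hr2, sub_zero]
    rfl

end CouplingKernel

/-- Either half of `M₂` determines its kernel: for every `c : Col → ℝ`, the conditions
`M₂ · c = 0`, `M₂⁻ · c = 0` and `M₂⁺ · c = 0` are equivalent.  Here `Λ = 2L` and the
hypothesis `Even (Λ + Σ λ)` encodes `L + Σ_i l_i ∈ ℤ`. -/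
theorem stmt4 (N : ℕ) (hN : 1 ≤ N) (lam : Fin N → ℕ) (Lam : ℕ)
    (hpar : Even (Lam + ∑ i, lam i)) :
    ∀ c : ColTuples N lam Lam → ℝ,
      ((M2mat N lam Lam).mulVec c = 0 ↔ (M2minus N lam Lam).mulVec c = 0) ∧
      ((M2mat N lam Lam).mulVec c = 0 ↔ (M2plus N lam Lam).mulVec c = 0) := by
  intro c
  have h := CouplingKernel.xPart_eq_zero_iff_yPart_eq_zero
    (CouplingKernel.suppIn_extend c)
  have h₁ := CouplingKernel.minus_iff hpar c
  have h₂ := CouplingKernel.plus_iff hpar c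
  have h₃ := h₁.trans (h.trans h₂.symm)
  have h₄ := CouplingKernel.full_iff c
  exact ⟨h₄.trans ⟨And.left, fun hm => ⟨hm, h₃.mp hm⟩⟩,
    h₄.trans ⟨And.right, fun hp => ⟨h₃.mpr hp, hp⟩⟩⟩
end

section
/- Fix an integer N ≥ 1 and nonnegative half-integers l_1, …, l_N (i.e. 2l_i ∈ ℕ). Let M_l := {m = (m_1, …, m_N) : l_i + m_i ∈ {0, 1, …, 2l_i} for every i}, and for a half-integer K let M_{l,K} := {m ∈ M_l : Σ_i m_i = K}. For m ∈ M_l and 1 ≤ j ≤ N, m_j^± denotes the tuple obtained from m by replacing m_j with m_j ± 1. Fix additionally a nonnegative half-integer L (2L ∈ ℕ) with L + Σ_i l_i ∈ ℤ, set M_L := {k : L + k ∈ {0, 1, …, 2L}}, and let Col := {m ∈ M_l : −L ≤ Σ_i m_i ≤ L}. Define the real matrix M₂ with rows indexed by pairs (m, k) ∈ M_l × M_L and columns indexed by m' ∈ Col, whose entry in row (m, k) and column m' equals: √((L + Σm + 1)(L − Σm)) if m' = m and k = Σm + 1; −√((L − Σm + 1)(L + Σm)) if m' = m and k = Σm − 1;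 −√((l_j + m_j + 1)(l_j − m_j)) if m' = m_j^+ for some j and k = Σm + 1; √((l_j − m_j + 1)(l_j + m_j)) if m' = m_j^− for some j and k = Σm − 1; and 0 otherwise (here Σm := Σ_i m_i). Let M^{up} be the submatrix of M₂ formed by the rows (m, Σm + 1) with −L ≤ Σm ≤ L − 1 together with the rows (m, L) with Σm = L + 1. Then: (i) the rows of M^{up} are linearly independent over ℝ; (ii) {c : Col → ℝ | M^{up} · c = 0} = {c : Col → ℝ | M₂ · c = 0}; and consequently (iii) the ℝ-dimension of {c : Col → ℝ | M₂ · c = 0} equals card(M_{l,L}) − card(M_{l,L+1}). -/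
/-- The row index set of `M^{up}`: the rows `(m, Σm + 1)` with `−L ≤ Σm ≤ L − 1`
together with the rows `(m, L)` with `Σm = L + 1` (doubled encoding: `2k = 2κ − Λ`). -/
abbrev UpRows (N : ℕ) (lam : Fin N → ℕ) (Lam : ℕ) : Type :=
  {r : MTuples N lam × Fin (Lam + 1) //
    (2 * ((r.2 : ℕ) : ℤ) - (Lam : ℤ) = twoSum N lam r.1 + 2 ∧
      -(Lam : ℤ) ≤ twoSum N lam r.1 ∧ twoSum N lam r.1 ≤ (Lam : ℤ) - 2) ∨
    (((r.2 : ℕ) : ℤ) = (Lam : ℤ) ∧ twoSum N lam r.1 = (Lam : ℤ) + 2)}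

/-- The submatrix `M^{up}` of `M₂` formed by the rows in `UpRows`. -/
noncomputable def Mup (N : ℕ) (lam : Fin N → ℕ) (Lam : ℕ) :
    Matrix (UpRows N lam Lam) (ColTuples N lam Lam) ℝ :=
  Matrix.of fun r μ' => M2mat N lam Lam r.1 μ'

/-! ### Ladder operators on the tuple lattice -/

namespace Ladder

open Function

variable {N : ℕ}

/-- The box `∏ {0, …, λ_i}` as a finset of unbundled tuples. -/
def box (lam : Fin N → ℕ) : Finset (Fin N → ℕ) :=
  Fintype.piFinset fun i => Finset.range (lam i + 1)

lemma mem_box {lam μ : Fin N → ℕ} : μ ∈ box lam ↔ ∀ i, μ i ≤ lam i := by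
  simp [box, Fintype.mem_piFinset]

/-- Twice the weight of an unbundled tuple. -/
def wt (lam μ : Fin N → ℕ) : ℤ := 2 * (∑ i, (μ i : ℤ)) - ∑ i, (lam i : ℤ)

/-- The lowering operator of the tensor product representation, in coordinates. For `μ j ≥ lam j`
the coefficient is the square root of a nonpositive number, hence `0`. -/
noncomputable def lower (lam : Fin N → ℕ) (f : (Fin N → ℕ) → ℝ) (μ : Fin N → ℕ) : ℝ :=
  ∑ j, Real.sqrt (((μ j : ℝ) + 1) * ((lam j : ℝ) - (μ j : ℝ))) * f (update μ j (μ j + 1))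

/-- The raising operator, in coordinates. The truncated subtraction at `μ j = 0` is harmless
since the coefficient vanishes there. -/
noncomputable def raise (lam : Fin N → ℕ) (f : (Fin N → ℕ) → ℝ) (μ : Fin N → ℕ) : ℝ :=
  ∑ j, Real.sqrt (((lam j : ℝ) - (μ j : ℝ) + 1) * (μ j : ℝ)) * f (update μ j (μ j - 1))

lemma wt_up (lam μ : Fin N → ℕ) (j : Fin N) :
    wt lam (update μ j (μ j + 1)) = wt lam μ + 2 := by
  have h : (∑ i, ((update μ j (μ j + 1) i : ℕ) : ℤ)) = ∑ i, (μ i : ℤ) + 1 := by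
    rw [← Finset.add_sum_erase _ _ (Finset.mem_univ j),
      ← Finset.add_sum_erase _ (fun i => (μ i : ℤ)) (Finset.mem_univ j)]
    have : ∑ i ∈ Finset.univ.erase j, ((update μ j (μ j + 1) i : ℕ) : ℤ)
        = ∑ i ∈ Finset.univ.erase j, (μ i : ℤ) :=
      Finset.sum_congr rfl fun i hi => by
        rw [update_of_ne (Finset.ne_of_mem_erase hi)]
    rw [this, update_self]; push_cast; ring
  simp only [wt, h]; ring

lemma up_down (μ : Fin N → ℕ) (j : Fin N) (h : μ j ≠ 0) :
    update (update μ j (μ j - 1)) j (update μ j (μ j - 1) j + 1) = μ := by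
  rw [update_self, update_idem, Nat.sub_add_cancel (Nat.pos_of_ne_zero h), update_eq_self]

lemma down_up (μ : Fin N → ℕ) (j : Fin N) :
    update (update μ j (μ j + 1)) j (update μ j (μ j + 1) j - 1) = μ := by
  rw [update_self, update_idem, Nat.add_sub_cancel, update_eq_self]

lemma wt_down (lam μ : Fin N → ℕ) (j : Fin N) (h : μ j ≠ 0) :
    wt lam (update μ j (μ j - 1)) = wt lam μ - 2 := by
  have := wt_up lam (update μ j (μ j - 1)) j
  rw [up_down μ j h] at this
  omega

lemma box_up {lam μ : Fin N → ℕ} (hμ : μ ∈ box lam) (j : Fin N) (h : μ j < lam j) :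
    update μ j (μ j + 1) ∈ box lam := by
  rw [mem_box] at *
  intro i
  by_cases hi : i = j
  · subst hi; simpa using h
  · simpa [update_of_ne hi] using hμ i

lemma box_down {lam μ : Fin N → ℕ} (hμ : μ ∈ box lam) (j : Fin N) :
    update μ j (μ j - 1) ∈ box lam := by
  rw [mem_box] at *
  intro i
  by_cases hi : i = j
  · subst hi; have := hμ i; simp; omega
  · simpa [update_of_ne hi] using hμ i

lemma lower_congr {lam : Fin N → ℕ} {f g : (Fin N → ℕ) → ℝ} {μ : Fin N → ℕ} (c : ℝ)
    (hμ : μ ∈ box lam)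
    (h : ∀ ν ∈ box lam, wt lam ν = wt lam μ + 2 → f ν = c * g ν) :
    lower lam f μ = c * lower lam g μ := by
  rw [lower, lower, Finset.mul_sum]
  refine Finset.sum_congr rfl fun j _ => ?_
  rcases (mem_box.1 hμ j).lt_or_eq with hj | hj
  · rw [h _ (box_up hμ j hj) (wt_up lam μ j)]; ring
  · simp [hj]

lemma raise_congr {lam : Fin N → ℕ} {f g : (Fin N → ℕ) → ℝ} {μ : Fin N → ℕ} (c : ℝ)
    (hμ : μ ∈ box lam)
    (h : ∀ ν ∈ box lam, wt lam ν = wt lam μ - 2 → f ν = c * g ν) :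
    raise lam f μ = c * raise lam g μ := by
  rw [raise, raise, Finset.mul_sum]
  refine Finset.sum_congr rfl fun j _ => ?_
  by_cases hj : μ j = 0
  · simp [hj]
  · rw [h _ (box_down hμ j) (wt_down lam μ j hj)]; ring

/-- The `sl₂` commutation relation `EF - FE = H`. Contributions of two different tensor factors
cancel, and each single factor contributes `2 m_j = 2 μ_j - λ_j`. -/
lemma commutator {lam : Fin N → ℕ} (f : (Fin N → ℕ) → ℝ) {μ : Fin N → ℕ} (hμ : μ ∈ box lam) :
    raise lam (lower lam f) μ = lower lam (raise lam f) μ + (wt lam μ : ℝ) * f μ := by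
  have hw : (wt lam μ : ℝ) * f μ
      = ∑ j, ∑ k, if j = k then (2 * (μ j : ℝ) - lam j) * f μ else 0 := by
    simp only [Finset.sum_ite_eq, Finset.mem_univ, if_true, ← Finset.sum_mul]
    simp [wt, Finset.mul_sum]
  have hl : lower lam (raise lam f) μ = ∑ k, ∑ j,
      Real.sqrt (((μ j : ℝ) + 1) * ((lam j : ℝ) - (μ j : ℝ))) *
      (Real.sqrt (((lam k : ℝ) - (update μ j (μ j + 1) k : ℕ) + 1) * (update μ j (μ j + 1) k : ℕ))
        * f (update (update μ j (μ j + 1)) k (update μ j (μ j + 1) k - 1))) := by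
    rw [Finset.sum_comm]
    simp only [lower, raise, Finset.mul_sum]
  rw [hl, hw, ← Finset.sum_add_distrib]
  simp only [raise, lower, Finset.mul_sum]
  refine Finset.sum_congr rfl fun k _ => ?_
  rw [← Finset.sum_add_distrib]
  refine Finset.sum_congr rfl fun j _ => ?_
  by_cases hjk : k = j
  · subst hjk
    have hb : (μ k : ℝ) ≤ lam k := by exact_mod_cast mem_box.1 hμ k
    have h0 : (0 : ℝ) ≤ μ k := Nat.cast_nonneg _
    rw [down_up, if_pos rfl]
    have e1 : Real.sqrt (((μ k : ℝ) + 1) * ((lam k : ℝ) - (μ k : ℝ))) *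
        (Real.sqrt (((lam k : ℝ) - (update μ k (μ k + 1) k : ℕ) + 1) *
          (update μ k (μ k + 1) k : ℕ)) * f μ) = ((μ k : ℝ) + 1) * ((lam k : ℝ) - (μ k : ℝ)) * f μ := by
      rw [update_self]
      have : ((lam k : ℝ) - ((μ k + 1 : ℕ) : ℝ) + 1) * ((μ k + 1 : ℕ) : ℝ)
          = ((μ k : ℝ) + 1) * ((lam k : ℝ) - (μ k : ℝ)) := by push_cast; ring
      rw [this, ← mul_assoc, Real.mul_self_sqrt]
      exact mul_nonneg (by linarith) (by linarith)
    rw [e1]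
    by_cases hk : μ k = 0
    · simp [hk]
    · rw [up_down μ k hk, update_self]
      have : (((μ k - 1 : ℕ) : ℝ) + 1) * ((lam k : ℝ) - ((μ k - 1 : ℕ) : ℝ))
          = ((lam k : ℝ) - (μ k : ℝ) + 1) * (μ k : ℝ) := by
        rw [Nat.cast_sub (Nat.pos_of_ne_zero hk)]; push_cast; ring
      rw [this, ← mul_assoc, Real.mul_self_sqrt (mul_nonneg (by linarith) h0)]
      ring
  · rw [if_neg hjk, update_of_ne hjk, update_of_ne (Ne.symm hjk), update_comm hjk]
    ring

/-- Raising and lowering are adjoint for the standard inner product on the box. -/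
lemma adjoint (lam : Fin N → ℕ) (f g : (Fin N → ℕ) → ℝ) :
    ∑ μ ∈ box lam, lower lam f μ * g μ = ∑ μ ∈ box lam, f μ * raise lam g μ := by
  simp only [lower, raise, Finset.sum_mul, Finset.mul_sum]
  rw [Finset.sum_comm, Finset.sum_comm (s := box lam)]
  refine Finset.sum_congr rfl fun j _ => ?_
  have hL : ∀ μ ∈ box lam, Real.sqrt (((μ j : ℝ) + 1) * ((lam j : ℝ) - (μ j : ℝ))) *
      f (update μ j (μ j + 1)) * g μ ≠ 0 → μ j < lam j := by
    intro μ hμ h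
    refine lt_of_le_of_ne (mem_box.1 hμ j) fun e => h ?_
    simp [e]
  have hR : ∀ μ ∈ box lam, f μ * (Real.sqrt (((lam j : ℝ) - (μ j : ℝ) + 1) * (μ j : ℝ)) *
      g (update μ j (μ j - 1))) ≠ 0 → μ j ≠ 0 := by
    intro μ hμ h e
    apply h
    simp [e]
  refine Finset.sum_bij_ne_zero (fun μ _ _ => update μ j (μ j + 1)) ?_ ?_ ?_ ?_
  · intro μ hμ h
    exact box_up hμ j (hL μ hμ h)
  · intro μ _ _ ν _ _ h
    rw [← down_up μ j, h, down_up]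
  · intro ν hν h
    have h0 := hR ν hν h
    refine ⟨update ν j (ν j - 1), box_down hν j, ?_, up_down ν j h0⟩
    rw [up_down ν j h0, update_self]
    have : (((ν j - 1 : ℕ) : ℝ) + 1) * ((lam j : ℝ) - ((ν j - 1 : ℕ) : ℝ))
        = ((lam j : ℝ) - (ν j : ℝ) + 1) * (ν j : ℝ) := by
      rw [Nat.cast_sub (Nat.pos_of_ne_zero h0)]; push_cast; ring
    rw [this]
    intro h'
    apply h
    rw [← h']; ring
  · intro μ hμ h
    rw [down_up, update_self]
    have : ((lam j : ℝ) - ((μ j + 1 : ℕ) : ℝ) + 1) * ((μ j + 1 : ℕ) : ℝ)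
        = ((μ j : ℝ) + 1) * ((lam j : ℝ) - (μ j : ℝ)) := by push_cast; ring
    rw [this]; ring

/-- The coefficient `√((L - K + 1)(L + K))` at twice the weight `w = 2K`, with `Lam = 2L`. -/
noncomputable def ladderCoef (Lam : ℕ) (w : ℤ) : ℝ :=
  Real.sqrt ((((Lam : ℝ) - (w : ℝ)) / 2 + 1) * (((Lam : ℝ) + (w : ℝ)) / 2))

lemma ladderCoef_sq (Lam : ℕ) (w : ℤ) (h1 : -(Lam : ℤ) ≤ w) (h2 : w ≤ Lam + 2) :
    ladderCoef Lam w * ladderCoef Lam w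
      = (((Lam : ℝ) - (w : ℝ)) / 2 + 1) * (((Lam : ℝ) + (w : ℝ)) / 2) := by
  have h1' : -(Lam : ℝ) ≤ w := by exact_mod_cast h1
  have h2' : (w : ℝ) ≤ Lam + 2 := by exact_mod_cast h2
  exact Real.mul_self_sqrt (mul_nonneg (by linarith) (by linarith))

lemma ladderCoef_pos (Lam : ℕ) (w : ℤ) (h1 : -(Lam : ℤ) < w) (h2 : w < Lam + 2) :
    0 < ladderCoef Lam w := by
  have h1' : -(Lam : ℝ) < w := by exact_mod_cast h1
  have h2' : (w : ℝ) < Lam + 2 := by exact_mod_cast h2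
  exact Real.sqrt_pos.2 (mul_pos (by linarith) (by linarith))

lemma wt_parity {lam : Fin N → ℕ} {Lam : ℕ} (hpar : Even (Lam + ∑ i, lam i)) (μ : Fin N → ℕ) :
    ∃ t : ℤ, wt lam μ = Lam + 2 * t := by
  obtain ⟨r, hr⟩ := hpar
  have hr' : (Lam : ℤ) + ∑ i, (lam i : ℤ) = r + r := by exact_mod_cast hr
  refine ⟨∑ i, (μ i : ℤ) - r, ?_⟩
  rw [wt]; linarith

/-! ### Highest weight vectors -/

section HighestWeight

variable {lam : Fin N → ℕ} {Lam : ℕ} {f : (Fin N → ℕ) → ℝ}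

/-- On a function satisfying the lowering recursion, and the raising recursion one weight step
above `μ`, the operator `FE` acts by its expected scalar. At `wt = Lam` that scalar is `0`. -/
lemma lower_raise
    (hlow : ∀ μ ∈ box lam, -(Lam : ℤ) ≤ wt lam μ → wt lam μ ≤ Lam - 2 →
      lower lam f μ = ladderCoef Lam (wt lam μ + 2) * f μ)
    (hpar : Even (Lam + ∑ i, lam i))
    {μ : Fin N → ℕ} (hμ : μ ∈ box lam) (h1 : -(Lam : ℤ) ≤ wt lam μ) (h2 : wt lam μ ≤ Lam)
    (hup : ∀ ν ∈ box lam, wt lam ν = wt lam μ + 2 →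
      raise lam f ν = ladderCoef Lam (wt lam μ + 2) * f ν) :
    lower lam (raise lam f) μ
      = ladderCoef Lam (wt lam μ + 2) * ladderCoef Lam (wt lam μ + 2) * f μ := by
  rw [lower_congr _ hμ hup]
  obtain ⟨t, ht⟩ := wt_parity hpar μ
  by_cases h : wt lam μ = Lam
  · have : ladderCoef Lam (wt lam μ + 2) = 0 := by
      rw [h, ladderCoef]; push_cast
      rw [show (((Lam : ℝ) - (Lam + 2)) / 2 + 1) = 0 by ring]; simp
    simp [this]
  · rw [hlow μ hμ h1 (by omega)]; ring

/-- The raising recursion propagates from the highest weight down to all weights `> -L`. -/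
lemma raise_eq
    (hlow : ∀ μ ∈ box lam, -(Lam : ℤ) ≤ wt lam μ → wt lam μ ≤ Lam - 2 →
      lower lam f μ = ladderCoef Lam (wt lam μ + 2) * f μ)
    (htop : ∀ μ ∈ box lam, wt lam μ = Lam + 2 → raise lam f μ = 0)
    (hpar : Even (Lam + ∑ i, lam i)) (n : ℕ) :
    ∀ μ ∈ box lam, -(Lam : ℤ) < wt lam μ → wt lam μ = Lam + 2 - 2 * n →
      raise lam f μ = ladderCoef Lam (wt lam μ) * f μ := by
  induction n with
  | zero =>
    intro μ hμ _ h2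
    have h2' : wt lam μ = Lam + 2 := by simpa using h2
    have : ladderCoef Lam (wt lam μ) = 0 := by
      rw [h2', ladderCoef]; push_cast
      rw [show (((Lam : ℝ) - (Lam + 2)) / 2 + 1) = 0 by ring]; simp
    rw [htop μ hμ h2', this, zero_mul]
  | succ n ih =>
    intro μ hμ h1 h2
    push_cast at h2
    obtain ⟨t, ht⟩ := wt_parity hpar μ
    have hdu := lower_raise hlow hpar hμ h1.le (by omega) (fun ν hν hw => by
      rw [ih ν hν (by omega) (by omega), hw])
    have hpos := ladderCoef_pos Lam (wt lam μ) h1 (by omega)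
    have hud : raise lam (lower lam f) μ = ladderCoef Lam (wt lam μ) * raise lam f μ :=
      raise_congr _ hμ fun ν hν hw => by
        rw [hlow ν hν (by omega) (by omega), hw, sub_add_cancel]
    rw [commutator f hμ, hdu, ladderCoef_sq _ _ (by omega) (by omega)] at hud
    have hsq := ladderCoef_sq Lam (wt lam μ) h1.le (by omega)
    apply mul_left_cancel₀ hpos.ne'
    rw [← hud, ← mul_assoc, hsq]
    push_cast
    ring

/-- The lowering operator kills the weight `-L` component: the norm squared of its image equals
`⟨f, E F f⟩` at weight `-L`, and `E F` acts there by `0`. -/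
lemma lower_bottom
    (hlow : ∀ μ ∈ box lam, -(Lam : ℤ) ≤ wt lam μ → wt lam μ ≤ Lam - 2 →
      lower lam f μ = ladderCoef Lam (wt lam μ + 2) * f μ)
    (htop : ∀ μ ∈ box lam, wt lam μ = Lam + 2 → raise lam f μ = 0)
    (hpar : Even (Lam + ∑ i, lam i)) :
    ∀ μ ∈ box lam, wt lam μ = -Lam - 2 → lower lam f μ = 0 := by
  classical
  set g : (Fin N → ℕ) → ℝ := fun μ => if wt lam μ = -Lam - 2 then lower lam f μ else 0 with hg
  have hz : ∑ μ ∈ box lam, g μ * g μ = 0 := by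
    have e : ∑ μ ∈ box lam, g μ * g μ = ∑ μ ∈ box lam, lower lam f μ * g μ :=
      Finset.sum_congr rfl fun μ _ => by
        simp only [hg]; split_ifs <;> simp
    rw [e, adjoint]
    refine Finset.sum_eq_zero fun μ hμ => ?_
    by_cases hw : wt lam μ = -Lam
    · have h1 : raise lam g μ = 1 * raise lam (lower lam f) μ :=
        raise_congr 1 hμ fun ν _ hν => by
          rw [hw] at hν
          simp [hg, hν]
      have hdu := lower_raise hlow hpar hμ (by omega) (by omega) (fun ν hν hw' => by
        rw [raise_eq hlow htop hpar Lam ν hν (by omega) (by omega), hw'])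
      rw [h1, one_mul, commutator f hμ, hdu, ladderCoef_sq _ _ (by omega) (by omega), hw]
      push_cast
      ring
    · have h1 : raise lam g μ = 0 * raise lam g μ :=
        raise_congr 0 hμ fun ν _ hν => by
          have : wt lam ν ≠ -Lam - 2 := by omega
          simp [hg, this]
      rw [h1]; ring
  intro μ hμ hw
  have := (Finset.sum_eq_zero_iff_of_nonneg (fun ν _ => mul_self_nonneg (g ν))).1 hz μ hμ
  have := mul_self_eq_zero.1 this
  simpa [hg, hw] using this

end HighestWeight

/-- The lowering operator is injective on a positive weight space:
`‖F g‖² = ‖E g‖² + 2K ‖g‖²` there. -/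
lemma lower_injective {lam : Fin N → ℕ} {g : (Fin N → ℕ) → ℝ} {w : ℤ} (hw : 0 < w)
    (hsupp : ∀ μ ∈ box lam, wt lam μ ≠ w → g μ = 0)
    (h : ∀ μ ∈ box lam, lower lam g μ = 0) : ∀ μ ∈ box lam, g μ = 0 := by
  have h1 : ∑ μ ∈ box lam, g μ * raise lam (lower lam g) μ = 0 := by
    rw [← adjoint]
    exact Finset.sum_eq_zero fun μ hμ => by rw [h μ hμ, zero_mul]
  have h2 : ∑ μ ∈ box lam, g μ * lower lam (raise lam g) μ
      = ∑ μ ∈ box lam, raise lam g μ * raise lam g μ := by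
    rw [← adjoint]
    exact Finset.sum_congr rfl fun μ _ => mul_comm _ _
  have h3 : ∑ μ ∈ box lam, g μ * raise lam (lower lam g) μ
      = ∑ μ ∈ box lam, raise lam g μ * raise lam g μ + w * ∑ μ ∈ box lam, g μ * g μ := by
    rw [← h2, Finset.mul_sum, ← Finset.sum_add_distrib]
    refine Finset.sum_congr rfl fun μ hμ => ?_
    rw [commutator g hμ]
    by_cases hμw : wt lam μ = w
    · rw [hμw]; ring
    · rw [hsupp μ hμ hμw]; ring
  have hw' : (0 : ℝ) < w := by exact_mod_cast hw
  have h4 : 0 ≤ ∑ μ ∈ box lam, raise lam g μ * raise lam g μ :=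
    Finset.sum_nonneg fun _ _ => mul_self_nonneg _
  have h5 : 0 ≤ ∑ μ ∈ box lam, g μ * g μ := Finset.sum_nonneg fun _ _ => mul_self_nonneg _
  have h6 : ∑ μ ∈ box lam, g μ * g μ = 0 := by nlinarith
  intro μ hμ
  exact mul_self_eq_zero.1
    ((Finset.sum_eq_zero_iff_of_nonneg (fun ν _ => mul_self_nonneg (g ν))).1 h6 μ hμ)

/-! ### The matrices in terms of the ladder operators -/

/-- Extension of a vector indexed by `Col` to all tuples, by zero. -/
noncomputable def ext0 {lam : Fin N → ℕ} {Lam : ℕ} (c : ColTuples N lam Lam → ℝ)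
    (ν : Fin N → ℕ) : ℝ := by
  classical exact if h : ∃ μ : ColTuples N lam Lam, μ.1.1 = ν then c h.choose else 0

variable {lam : Fin N → ℕ} {Lam : ℕ}

lemma ext0_apply (c : ColTuples N lam Lam → ℝ) (μ : ColTuples N lam Lam) :
    ext0 c μ.1.1 = c μ := by
  have h : ∃ μ' : ColTuples N lam Lam, μ'.1.1 = μ.1.1 := ⟨μ, rfl⟩
  rw [ext0, dif_pos h]
  congr 1
  exact Subtype.ext (Subtype.ext h.choose_spec)

lemma ext0_zero (c : ColTuples N lam Lam → ℝ) (ν : Fin N → ℕ)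
    (h : ¬ (-(Lam : ℤ) ≤ wt lam ν ∧ wt lam ν ≤ Lam)) : ext0 c ν = 0 := by
  rw [ext0, dif_neg]
  rintro ⟨μ, rfl⟩
  exact h μ.2

lemma sum_ite (c : ColTuples N lam Lam → ℝ) (ν : Fin N → ℕ) (P : Prop) [Decidable P] (x : ℝ) :
    ∑ μ' : ColTuples N lam Lam, (if μ'.1.1 = ν ∧ P then x else 0) * c μ'
      = if P then x * ext0 c ν else 0 := by
  classical
  by_cases hP : P
  · simp only [hP, and_true, if_true]
    by_cases h : ∃ μ : ColTuples N lam Lam, μ.1.1 = ν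
    · obtain ⟨μ, rfl⟩ := h
      rw [ext0_apply, Finset.sum_eq_single μ]
      · simp
      · intro b _ hb
        rw [if_neg fun e => hb (Subtype.ext (Subtype.ext e)), zero_mul]
      · simp
    · rw [ext0, dif_neg h, mul_zero]
      exact Finset.sum_eq_zero fun μ _ => by
        rw [if_neg fun e => h ⟨μ, e⟩, zero_mul]
  · simp [hP]

/-- The rows of `M₂` evaluate the raising and the lowering recursion. -/
lemma M2_mulVec (c : ColTuples N lam Lam → ℝ) (μ : MTuples N lam) (κ : Fin (Lam + 1)) :
    (M2mat N lam Lam).mulVec c (μ, κ)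
      = (if 2 * ((κ : ℕ) : ℤ) - (Lam : ℤ) = wt lam μ.1 + 2 then
          ladderCoef Lam (wt lam μ.1 + 2) * ext0 c μ.1 - lower lam (ext0 c) μ.1 else 0)
        + (if 2 * ((κ : ℕ) : ℤ) - (Lam : ℤ) = wt lam μ.1 - 2 then
          raise lam (ext0 c) μ.1 - ladderCoef Lam (wt lam μ.1) * ext0 c μ.1 else 0) := by
  have hts : twoSum N lam μ = wt lam μ.1 := rfl
  have hc : Real.sqrt ((((Lam : ℝ) + (wt lam μ.1 : ℝ)) / 2 + 1) *
        (((Lam : ℝ) - (wt lam μ.1 : ℝ)) / 2)) = ladderCoef Lam (wt lam μ.1 + 2) := by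
    rw [ladderCoef]; congr 1; push_cast; ring
  have hc' : Real.sqrt ((((Lam : ℝ) - (wt lam μ.1 : ℝ)) / 2 + 1) *
        (((Lam : ℝ) + (wt lam μ.1 : ℝ)) / 2)) = ladderCoef Lam (wt lam μ.1) := rfl
  -- `add_mul` itself would also rewrite inside the square roots
  have hd : ∀ A B C D x : ℝ, (A + B + C + D) * x = A * x + B * x + C * x + D * x :=
    fun A B C D x => by ring
  simp only [Matrix.mulVec, dotProduct, M2mat, Matrix.of_apply, hts, hc, hc', hd,
    Finset.sum_add_distrib, Finset.sum_mul]
  rw [Finset.sum_comm (s := Finset.univ (α := ColTuples N lam Lam)),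
    Finset.sum_comm (s := Finset.univ (α := ColTuples N lam Lam))]
  simp only [sum_ite]
  have e1 : ∀ P : Prop, ∀ [Decidable P],
      (∑ j, if P then -Real.sqrt (((μ.1 j : ℝ) + 1) * ((lam j : ℝ) - (μ.1 j : ℝ))) *
        ext0 c (update μ.1 j (μ.1 j + 1)) else 0)
      = if P then - lower lam (ext0 c) μ.1 else 0 := by
    intro P _
    split_ifs
    · simp [lower]
    · simp
  have e2 : ∀ P : Prop, ∀ [Decidable P],
      (∑ j, if μ.1 j ≠ 0 ∧ P then Real.sqrt (((lam j : ℝ) - (μ.1 j : ℝ) + 1) * (μ.1 j : ℝ)) *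
        ext0 c (update μ.1 j (μ.1 j - 1)) else 0)
      = if P then raise lam (ext0 c) μ.1 else 0 := by
    intro P _
    split_ifs with hP
    · rw [raise]
      refine Finset.sum_congr rfl fun j _ => ?_
      by_cases hj : μ.1 j = 0
      · simp [hj]
      · simp [hj, hP]
    · simp [hP]
  rw [e1, e2]
  split_ifs <;> ring

lemma mem_box_of (μ : MTuples N lam) : μ.1 ∈ box lam := mem_box.2 μ.2

lemma exists_row (hpar : Even (Lam + ∑ i, lam i)) (μ : MTuples N lam)
    (h : (-(Lam : ℤ) ≤ wt lam μ.1 ∧ wt lam μ.1 ≤ Lam - 2) ∨ wt lam μ.1 = Lam + 2) :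
    ∃ r : UpRows N lam Lam, r.1.1 = μ := by
  obtain ⟨t, ht⟩ := wt_parity hpar μ.1
  rcases h with ⟨h1, h2⟩ | h
  · refine ⟨⟨(μ, ⟨((Lam : ℤ) + t + 1).toNat, by omega⟩), Or.inl ⟨?_, h1, h2⟩⟩, rfl⟩
    change 2 * ((((Lam : ℤ) + t + 1).toNat : ℕ) : ℤ) - (Lam : ℤ) = wt lam μ.1 + 2
    omega
  · exact ⟨⟨(μ, ⟨Lam, by omega⟩), Or.inr ⟨rfl, h⟩⟩, rfl⟩

lemma row_cases (r : UpRows N lam Lam) :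
    (2 * ((r.1.2 : ℕ) : ℤ) - (Lam : ℤ) = wt lam r.1.1.1 + 2 ∧
      -(Lam : ℤ) ≤ wt lam r.1.1.1 ∧ wt lam r.1.1.1 ≤ (Lam : ℤ) - 2) ∨
    (((r.1.2 : ℕ) : ℤ) = (Lam : ℤ) ∧ wt lam r.1.1.1 = (Lam : ℤ) + 2) := r.2

lemma row_ext (r s : UpRows N lam Lam) (h : r.1.1 = s.1.1) : r = s := by
  have hw : wt lam r.1.1.1 = wt lam s.1.1.1 := by rw [h]
  refine Subtype.ext (Prod.ext h (Fin.ext ?_))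
  rcases row_cases r with h1 | h1 <;> rcases row_cases s with h2 | h2 <;> omega

/-- The two kinds of rows of `M^{up}`: the lowering recursion, and `E c = 0` at weight `L`. -/
lemma Mup_mulVec (c : ColTuples N lam Lam → ℝ) (r : UpRows N lam Lam) :
    (Mup N lam Lam).mulVec c r
      = if wt lam r.1.1.1 = Lam + 2 then raise lam (ext0 c) r.1.1.1
        else ladderCoef Lam (wt lam r.1.1.1 + 2) * ext0 c r.1.1.1
          - lower lam (ext0 c) r.1.1.1 := by
  have e : (Mup N lam Lam).mulVec c r = (M2mat N lam Lam).mulVec c (r.1.1, r.1.2) := rfl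
  rw [e, M2_mulVec]
  rcases row_cases r with h | h
  · rw [if_pos h.1, if_neg (by omega), if_neg (by omega), add_zero]
  · rw [if_neg (by omega), if_pos (by omega), if_pos h.2, ext0_zero c _ (by omega)]
    ring

lemma ker_eq (hpar : Even (Lam + ∑ i, lam i)) (c : ColTuples N lam Lam → ℝ) :
    (Mup N lam Lam).mulVec c = 0 ↔ (M2mat N lam Lam).mulVec c = 0 := by
  constructor
  · intro h
    have hlow : ∀ μ ∈ box lam, -(Lam : ℤ) ≤ wt lam μ → wt lam μ ≤ Lam - 2 →
        lower lam (ext0 c) μ = ladderCoef Lam (wt lam μ + 2) * ext0 c μ := by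
      intro μ hμ h1 h2
      obtain ⟨r, hr⟩ := exists_row hpar ⟨μ, mem_box.1 hμ⟩ (Or.inl ⟨h1, h2⟩)
      have := congrFun h r
      rw [Mup_mulVec, hr, if_neg (by change ¬ wt lam μ = Lam + 2; omega)] at this
      exact (sub_eq_zero.1 this).symm
    have htop : ∀ μ ∈ box lam, wt lam μ = Lam + 2 → raise lam (ext0 c) μ = 0 := by
      intro μ hμ h1
      obtain ⟨r, hr⟩ := exists_row hpar ⟨μ, mem_box.1 hμ⟩ (Or.inr h1)
      have := congrFun h r
      rwa [Mup_mulVec, hr, if_pos h1] at this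
    funext ⟨μ, κ⟩
    rw [M2_mulVec]
    have hκ := κ.2
    have hμ := mem_box_of μ
    split_ifs with h1 h2 h2
    · omega
    · by_cases h3 : wt lam μ.1 = -Lam - 2
      · rw [lower_bottom hlow htop hpar _ hμ h3, ext0_zero c _ (by omega)]; simp
      · rw [hlow _ hμ (by omega) (by omega)]; simp
    · rw [raise_eq hlow htop hpar (Lam - κ) _ hμ (by omega) (by omega)]; simp
    · simp
  · intro h
    funext r
    exact congrFun h r.1

open Classical in
/-- Rows of `M^{up}` are independent. For a vanishing combination `y`, the components of weight
`< L` vanish successively from the lowest weight upwards, and then the component of weight `L + 1`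
is killed by the injective lowering operator. -/
lemma rows_independent (hpar : Even (Lam + ∑ i, lam i)) :
    LinearIndependent ℝ
      (fun r : UpRows N lam Lam => (Mup N lam Lam r : ColTuples N lam Lam → ℝ)) := by
  rw [Fintype.linearIndependent_iff]
  intro y hy
  have hpair : ∀ c : ColTuples N lam Lam → ℝ, ∑ r, y r * (Mup N lam Lam).mulVec c r = 0 := by
    intro c
    have : ∑ r, y r * (Mup N lam Lam).mulVec c r
        = ∑ μ, (∑ r, y r • (Mup N lam Lam r : ColTuples N lam Lam → ℝ)) μ * c μ := by
      simp only [Matrix.mulVec, dotProduct, Finset.mul_sum, Finset.sum_apply, Pi.smul_apply,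
        smul_eq_mul, Finset.sum_mul]
      rw [Finset.sum_comm]
      simp only [mul_assoc]
    rw [this, hy]; simp
  set z : (Fin N → ℕ) → ℝ := fun ν => ∑ r, if r.1.1.1 = ν then y r else 0 with hz
  have hzr : ∀ r, z r.1.1.1 = y r := by
    intro r
    simp only [hz]
    rw [Finset.sum_eq_single r]
    · simp
    · intro s _ hs
      rw [if_neg fun e => hs (row_ext s r (Subtype.ext e))]
    · simp
  have hz0 : ∀ ν, ¬ ((-(Lam : ℤ) ≤ wt lam ν ∧ wt lam ν ≤ Lam - 2) ∨ wt lam ν = Lam + 2) →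
      z ν = 0 := by
    intro ν h
    refine Finset.sum_eq_zero fun r _ => if_neg ?_
    rintro rfl
    rcases row_cases r with h1 | h1
    · exact h (Or.inl h1.2)
    · exact h (Or.inr h1.2)
  have hsum : ∀ G : (Fin N → ℕ) → ℝ, ∑ r, y r * G r.1.1.1 = ∑ μ ∈ box lam, z μ * G μ := by
    intro G
    simp only [hz, Finset.sum_mul]
    rw [Finset.sum_comm]
    refine Finset.sum_congr rfl fun r _ => ?_
    simp only [ite_mul, zero_mul]
    rw [Finset.sum_ite_eq, if_pos (mem_box_of r.1.1)]
  set z1 : (Fin N → ℕ) → ℝ := fun ν => if wt lam ν = Lam + 2 then 0 else z ν with hz1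
  set z2 : (Fin N → ℕ) → ℝ := fun ν => if wt lam ν = Lam + 2 then z ν else 0 with hz2
  -- the vanishing combination, read off at a column
  have key : ∀ μ ∈ box lam, -(Lam : ℤ) ≤ wt lam μ → wt lam μ ≤ Lam →
      ladderCoef Lam (wt lam μ + 2) * z1 μ - raise lam z1 μ + lower lam z2 μ = 0 := by
    intro μ hμ h1 h2
    let μ0 : ColTuples N lam Lam := ⟨⟨μ, mem_box.1 hμ⟩, h1, h2⟩
    let c : ColTuples N lam Lam → ℝ := fun ν => if ν = μ0 then 1 else 0
    have hc : ∀ ν, ext0 c ν = if ν = μ then 1 else 0 := by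
      intro ν
      by_cases h : ∃ κ : ColTuples N lam Lam, κ.1.1 = ν
      · obtain ⟨κ, rfl⟩ := h
        rw [ext0_apply]
        have : κ = μ0 ↔ κ.1.1 = μ := by
          rw [Subtype.ext_iff, Subtype.ext_iff]
        simp only [c, this]
      · rw [ext0, dif_neg h, if_neg]
        rintro rfl
        exact h ⟨μ0, rfl⟩
    have hp := hpair c
    simp only [Mup_mulVec] at hp
    rw [hsum (fun ν => if wt lam ν = Lam + 2 then raise lam (ext0 c) ν
        else ladderCoef Lam (wt lam ν + 2) * ext0 c ν - lower lam (ext0 c) ν)] at hp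
    have hsplit : ∑ ν ∈ box lam, z ν * (if wt lam ν = Lam + 2 then raise lam (ext0 c) ν
        else ladderCoef Lam (wt lam ν + 2) * ext0 c ν - lower lam (ext0 c) ν)
        = ∑ ν ∈ box lam, ext0 c ν * (ladderCoef Lam (wt lam ν + 2) * z1 ν)
          - ∑ ν ∈ box lam, lower lam (ext0 c) ν * z1 ν
          + ∑ ν ∈ box lam, z2 ν * raise lam (ext0 c) ν := by
      rw [← Finset.sum_sub_distrib, ← Finset.sum_add_distrib]
      refine Finset.sum_congr rfl fun ν _ => ?_
      simp only [hz1, hz2]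
      split_ifs <;> ring
    rw [hsplit, adjoint, ← adjoint lam z2] at hp
    simpa [hc, hμ] using hp
  have hlow : ∀ n : ℕ, ∀ μ ∈ box lam, wt lam μ = -Lam + 2 * n → z1 μ = 0 := by
    intro n
    induction n with
    | zero =>
      intro μ hμ hw
      by_cases h : wt lam μ ≤ Lam - 2
      · have hk := key μ hμ (by omega) (by omega)
        rw [raise_congr (g := z1) 0 hμ fun ν _ hν => ?_,
          lower_congr (g := z2) 0 hμ fun ν _ hν => ?_] at hk
        · have := ladderCoef_pos Lam (wt lam μ + 2) (by omega) (by omega)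
          simpa [this.ne'] using hk
        · have : wt lam ν ≠ Lam + 2 := by omega
          simp [hz2, this]
        · simp only [hz1]
          rw [hz0 ν (by omega)]; simp
      · simp only [hz1]
        split_ifs with h'
        · rfl
        · exact hz0 μ (by omega)
    | succ n ih =>
      intro μ hμ hw
      push_cast at hw
      by_cases h : wt lam μ ≤ Lam - 2
      · have hk := key μ hμ (by omega) (by omega)
        rw [raise_congr (g := z1) 0 hμ fun ν hν' hν => ?_,
          lower_congr (g := z2) 0 hμ fun ν _ hν => ?_] at hk
        · have := ladderCoef_pos Lam (wt lam μ + 2) (by omega) (by omega)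
          simpa [this.ne'] using hk
        · have : wt lam ν ≠ Lam + 2 := by omega
          simp [hz2, this]
        · rw [ih ν hν' (by omega)]; simp
      · simp only [hz1]
        split_ifs with h'
        · rfl
        · exact hz0 μ (by omega)
  have hz1' : ∀ μ ∈ box lam, z1 μ = 0 := by
    intro μ hμ
    obtain ⟨t, ht⟩ := wt_parity hpar μ
    by_cases h : -(Lam : ℤ) ≤ wt lam μ
    · exact hlow ((Lam : ℤ) + t).toNat μ hμ (by omega)
    · simp only [hz1]
      rw [hz0 μ (by omega)]; simp
  have hz2' : ∀ μ ∈ box lam, z2 μ = 0 := by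
    refine lower_injective (w := Lam + 2) (by omega) ?_ ?_
    · intro μ _ hw
      simp [hz2, hw]
    · intro μ hμ
      by_cases hw : wt lam μ = Lam
      · have hk := key μ hμ (by omega) (by omega)
        rw [hz1' μ hμ, raise_congr (g := z1) 0 hμ fun ν hν' _ => ?_] at hk
        · simpa using hk
        · rw [hz1' ν hν']; simp
      · rw [lower_congr (g := z2) 0 hμ fun ν _ hν => ?_, zero_mul]
        have : wt lam ν ≠ Lam + 2 := by omega
        simp [hz2, this]
  intro r
  rw [← hzr r]
  have h1 := hz1' _ (mem_box_of r.1.1)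
  have h2 := hz2' _ (mem_box_of r.1.1)
  simp only [hz1, hz2] at h1 h2
  split_ifs at h1 h2 with h
  · exact h2
  · exact h1

/-- Both sides count tuples of weight in `[-L, L] ∪ {L + 1}`, as there is no weight strictly
between `L - 1` and `L`. -/
lemma card_rows (hpar : Even (Lam + ∑ i, lam i)) :
    Nat.card (UpRows N lam Lam) + Nat.card {μ : MTuples N lam // twoSum N lam μ = (Lam : ℤ)}
      = Nat.card (ColTuples N lam Lam)
        + Nat.card {μ : MTuples N lam // twoSum N lam μ = (Lam : ℤ) + 2} := by
  classical
  let e : UpRows N lam Lam ≃ {μ : MTuples N lam //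
      (-(Lam : ℤ) ≤ twoSum N lam μ ∧ twoSum N lam μ ≤ Lam - 2) ∨ twoSum N lam μ = Lam + 2} :=
    Equiv.ofBijective (fun r => ⟨r.1.1, r.2.imp (fun h => h.2) (fun h => h.2)⟩) ⟨by
      intro r s h
      exact row_ext r s (congrArg Subtype.val h), by
      rintro ⟨μ, h⟩
      obtain ⟨r, hr⟩ := exists_row hpar μ h
      exact ⟨r, Subtype.ext hr⟩⟩
  let e' : ColTuples N lam Lam ≃ {μ : MTuples N lam //
      (-(Lam : ℤ) ≤ twoSum N lam μ ∧ twoSum N lam μ ≤ Lam - 2) ∨ twoSum N lam μ = Lam} :=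
    Equiv.subtypeEquivRight fun μ => by
      obtain ⟨t, ht⟩ := wt_parity hpar μ.1
      change twoSum N lam μ = _ at ht
      omega
  rw [Nat.card_congr e, Nat.card_congr e']
  simp only [Nat.card_eq_fintype_card]
  rw [Fintype.card_subtype_or_disjoint, Fintype.card_subtype_or_disjoint]
  · ring
  · rw [Pi.disjoint_iff]
    intro μ
    simp only [Prop.disjoint_iff]
    omega
  · rw [Pi.disjoint_iff]
    intro μ
    simp only [Prop.disjoint_iff]
    omega

end Ladder

/-- (i) The rows of `M^{up}` are linearly independent; (ii) `ker M^{up} = ker M₂`; and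
consequently (iii) `dim ker M₂ = card M_{l,L} − card M_{l,L+1}` (here `twoSum μ = Λ`
encodes `Σ m = L` and `twoSum μ = Λ + 2` encodes `Σ m = L + 1`). -/
theorem stmt5 (N : ℕ) (hN : 1 ≤ N) (lam : Fin N → ℕ) (Lam : ℕ)
    (hpar : Even (Lam + ∑ i, lam i)) :
    LinearIndependent ℝ
      (fun r : UpRows N lam Lam => (Mup N lam Lam r : ColTuples N lam Lam → ℝ)) ∧
    {c : ColTuples N lam Lam → ℝ | (Mup N lam Lam).mulVec c = 0}
      = {c : ColTuples N lam Lam → ℝ | (M2mat N lam Lam).mulVec c = 0} ∧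
    (Module.finrank ℝ (LinearMap.ker (M2mat N lam Lam).mulVecLin) : ℤ)
      = (Nat.card {μ : MTuples N lam // twoSum N lam μ = (Lam : ℤ)} : ℤ)
        - (Nat.card {μ : MTuples N lam // twoSum N lam μ = (Lam : ℤ) + 2} : ℤ) := by
  classical
  have hli := Ladder.rows_independent (N := N) hpar
  refine ⟨hli, Set.ext fun c => Ladder.ker_eq hpar c, ?_⟩
  have hker : LinearMap.ker (M2mat N lam Lam).mulVecLin
      = LinearMap.ker (Mup N lam Lam).mulVecLin := by
    ext c
    simp only [LinearMap.mem_ker, Matrix.mulVecLin_apply]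
    exact (Ladder.ker_eq hpar c).symm
  have hrank : (Mup N lam Lam).rank = Fintype.card (UpRows N lam Lam) :=
    LinearIndependent.rank_matrix hli
  have hrn := LinearMap.finrank_range_add_finrank_ker (Mup N lam Lam).mulVecLin
  rw [Module.finrank_fintype_fun_eq_card] at hrn
  have hcard := Ladder.card_rows (N := N) hpar
  rw [Nat.card_eq_fintype_card (α := UpRows N lam Lam),
    Nat.card_eq_fintype_card (α := ColTuples N lam Lam)] at hcard
  rw [Matrix.rank] at hrank
  rw [hker]
  omega
end

section
/- Let N ≥ 2 be an integer, λ : Fin N → ℕ, and S ∈ ℤ. Then, as an identity of integers, card{μ : Fin N → ℕ | (∀ i, μ i ≤ λ i) and Σ_i μ i = S} − card{μ : Fin N → ℕ | (∀ i, μ i ≤ λ i) and Σ_i μ i = S + 1} = Σ_{T ⊆ Fin N} (−1)^{1 + |T|} · C(S + N − 1 − Σ_{i ∈ T} (λ i + 1), N − 2), where for x ∈ ℤ and k ∈ ℕ the symbol C(x, k) denotes the binomial coefficient 'x choose k' with the convention that C(x, k) = 0 whenever x < 0 (and the usual Nat.choose value for x ≥ 0; in particular C(x, k) = 0 also when 0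 ≤ x < k). -/
/-!
The number of `μ` with `μ i ≤ lam i` and `∑ μ = n` is the coefficient of `X ^ n` in
`∏ i, (1 + X + ⋯ + X ^ lam i) = ∏ i, (1 - X ^ (lam i + 1)) * (1 - X)⁻ᴺ`. Expanding the product over
subsets `T` gives the inclusion–exclusion count
`∑ T, (-1) ^ |T| * C(n + N - 1 - ∑ i ∈ T, (lam i + 1), N - 1)` (`card_bounded_eq`), which holds for
all integers `n` since both sides vanish for `n < 0`. The theorem is then the difference of this
formula at `S` and `S + 1`, simplified term by term by Pascal's rule (`intChoose_pascal`).
-/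

/-- The binomial coefficient `x choose k` for an integer `x`, with the convention that it
vanishes when `x < 0` (and takes the usual `Nat.choose` value when `x ≥ 0`). -/
def intChoose (x : ℤ) (k : ℕ) : ℤ := if 0 ≤ x then (x.toNat.choose k : ℤ) else 0

open PowerSeries in
/-- The generating function of bounded compositions, as an identity of formal power series. -/
lemma prod_geom_eq (d : ℕ) (lam : Fin (d + 1) → ℕ) :
    ∏ i, ∑ j ∈ Finset.range (lam i + 1), (X : ℤ⟦X⟧) ^ j =
      ∑ T : Finset (Fin (d + 1)), (-1) ^ T.card *
        (X ^ (∑ i ∈ T, (lam i + 1)) * mk fun n => ((d + n).choose d : ℤ)) := by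
  have h1 : (∏ i, ∑ j ∈ Finset.range (lam i + 1), (X : ℤ⟦X⟧) ^ j) * (1 - X) ^ (d + 1) =
      ∑ T : Finset (Fin (d + 1)), (-1) ^ T.card * X ^ (∑ i ∈ T, (lam i + 1)) := by
    have : ((1 : ℤ⟦X⟧) - X) ^ (d + 1) = ∏ _i : Fin (d + 1), (1 - X) := by simp
    rw [this, ← Finset.prod_mul_distrib]
    simp_rw [geom_sum_mul_neg, sub_eq_neg_add]
    rw [Finset.prod_add]
    simp [Finset.prod_neg, Finset.prod_pow_eq_pow_sum]
  have h2 : (1 - X) ^ (d + 1) * (mk fun n => ((d + n).choose d : ℤ)) = 1 := by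
    rw [mul_comm]; exact mk_add_choose_mul_one_sub_pow_eq_one ℤ d
  calc _ = (∏ i, ∑ j ∈ Finset.range (lam i + 1), (X : ℤ⟦X⟧) ^ j) *
        ((1 - X) ^ (d + 1) * (mk fun n => ((d + n).choose d : ℤ))) := by rw [h2, mul_one]
    _ = _ := by
      rw [← mul_assoc, h1, Finset.sum_mul]
      simp_rw [mul_assoc]

open PowerSeries in
/-- Number of bounded compositions as a coefficient of the generating function. -/
lemma card_eq_coeff (N : ℕ) (lam : Fin N → ℕ) (n : ℕ) :
    (Nat.card {μ : Fin N → ℕ // (∀ i, μ i ≤ lam i) ∧ (∑ i, (μ i : ℤ)) = n} : ℤ) =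
      coeff n (∏ i, ∑ j ∈ Finset.range (lam i + 1), (X : ℤ⟦X⟧) ^ j) := by
  rw [Finset.prod_univ_sum, map_sum]
  simp_rw [Finset.prod_pow_eq_pow_sum, coeff_X_pow]
  rw [Finset.sum_boole, Nat.cast_inj]
  refine Nat.subtype_card _ fun μ => ?_
  simp only [Finset.mem_filter, Fintype.mem_piFinset, Finset.mem_range, Nat.lt_succ_iff]
  rw [← Nat.cast_sum, Nat.cast_inj, eq_comm (a := n)]

/-- Inclusion–exclusion count of bounded compositions of an integer `S` into `d + 1` parts. -/
lemma card_bounded_eq (d : ℕ) (lam : Fin (d + 1) → ℕ) (S : ℤ) :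
    (Nat.card {μ : Fin (d + 1) → ℕ // (∀ i, μ i ≤ lam i) ∧ (∑ i, (μ i : ℤ)) = S} : ℤ) =
      ∑ T : Finset (Fin (d + 1)), (-1 : ℤ) ^ T.card *
        intChoose (S + d - ∑ i ∈ T, ((lam i : ℤ) + 1)) d := by
  rcases lt_or_ge S 0 with hS | hS
  · have : IsEmpty {μ : Fin (d + 1) → ℕ // (∀ i, μ i ≤ lam i) ∧ (∑ i, (μ i : ℤ)) = S} := by
      refine ⟨fun ⟨μ, _, h⟩ => ?_⟩
      have : 0 ≤ ∑ i, (μ i : ℤ) := by positivity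
      omega
    rw [Nat.card_of_isEmpty, Nat.cast_zero, eq_comm]
    refine Finset.sum_eq_zero fun T _ => ?_
    have hT : 0 ≤ ∑ i ∈ T, ((lam i : ℤ) + 1) := by positivity
    unfold intChoose
    split_ifs with h
    · rw [Nat.choose_eq_zero_of_lt (by omega)]; simp
    · simp
  · lift S to ℕ using hS
    rw [card_eq_coeff, prod_geom_eq, map_sum]
    refine Finset.sum_congr rfl fun T _ => ?_
    have hc : ((-1 : PowerSeries ℤ)) ^ T.card = PowerSeries.C ((-1) ^ T.card) := by simp
    have hs : ∑ i ∈ T, ((lam i : ℤ) + 1) = ((∑ i ∈ T, (lam i + 1) : ℕ) : ℤ) := by push_cast; rfl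
    rw [hc, PowerSeries.coeff_C_mul, PowerSeries.coeff_X_pow_mul', hs, PowerSeries.coeff_mk]
    congr 1
    generalize ∑ i ∈ T, (lam i + 1) = m
    unfold intChoose
    split_ifs with h h' h'
    · congr 2; omega
    · omega
    · rw [Nat.choose_eq_zero_of_lt (by omega)]; simp
    · rfl

/-- Pascal's rule survives the convention `C(x, k) = 0` for `x < 0` because the lower index `k + 1`
is positive: at `x = -1` all three terms vanish. -/
lemma intChoose_pascal (x : ℤ) (k : ℕ) :
    intChoose (x + 1) (k + 1) = intChoose x k + intChoose x (k + 1) := by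
  unfold intChoose
  rcases lt_trichotomy x (-1) with h | rfl | h
  · rw [if_neg (by omega), if_neg (by omega), if_neg (by omega)]; rfl
  · simp
  · lift x to ℕ using by omega
    have : ((x : ℤ) + 1).toNat = x + 1 := by omega
    rw [if_pos (by omega), if_pos (by omega), if_pos (by omega), this, Int.toNat_natCast,
      Nat.choose_succ_succ]
    push_cast; rfl

/-- Explicit formula for the difference of two bounded-composition counts:
`card{μ : μ i ≤ λ i, Σ μ = S} − card{μ : μ i ≤ λ i, Σ μ = S + 1}
  = Σ_{T ⊆ Fin N} (−1)^{1 + |T|} C(S + N − 1 − Σ_{i ∈ T} (λ i + 1), N − 2)`. -/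
theorem stmt7 (N : ℕ) (hN : 2 ≤ N) (lam : Fin N → ℕ) (S : ℤ) :
    (Nat.card {μ : Fin N → ℕ // (∀ i, μ i ≤ lam i) ∧ (∑ i, (μ i : ℤ)) = S} : ℤ)
      - (Nat.card {μ : Fin N → ℕ // (∀ i, μ i ≤ lam i) ∧ (∑ i, (μ i : ℤ)) = S + 1} : ℤ) =
      ∑ T : Finset (Fin N), (-1 : ℤ) ^ (1 + T.card) *
        intChoose (S + N - 1 - ∑ i ∈ T, ((lam i : ℤ) + 1)) (N - 2) := by
  obtain ⟨k, rfl⟩ : ∃ k, N = k + 1 + 1 := ⟨N - 2, by omega⟩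
  rw [card_bounded_eq, card_bounded_eq, ← Finset.sum_sub_distrib]
  refine Finset.sum_congr rfl fun T _ => ?_
  generalize ∑ i ∈ T, ((lam i : ℤ) + 1) = m
  have e1 : S + 1 + ((k + 1 : ℕ) : ℤ) - m = (S + ((k + 1 : ℕ) : ℤ) - m) + 1 := by ring
  have e2 : S + ((k + 1 + 1 : ℕ) : ℤ) - 1 - m = S + ((k + 1 : ℕ) : ℤ) - m := by push_cast; ring
  have e3 : k + 1 + 1 - 2 = k := by omega
  rw [e1, e2, e3, intChoose_pascal]
  ring
end

section
/- Let p, q, r, t be natural numbers with p + q = r + t. Define the real function d : ℝ → ℝ by d(β) = √(p! · q! · r! · t!) · Σ_{s = max(0, p−r)}^{min(p, t)} (−1)^s · (cos(β/2))^{2p + q − r − 2s} · (sin(β/2))^{r − p + 2s} / ((p − s)! · s! · (r − p + s)! · (t − s)!), and the complex-valued function D : ℝ³ → ℂ by D(α, β, γ) = exp(−i · ((p − q)/2) · α) · d(β) · exp(−i · ((r − t)/2) · γ). Then: (1) d(0) = 1 if p = r and d(0) = 0 otherwise; (2) the partial derivative of D with respect to α at (0, 0, 0), and likewise the partial derivative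 with respect to γ at (0, 0, 0), both equal −i · (r − t)/2 if p = r and 0 otherwise; and (3) the partial derivative of D with respect to β at (0, 0, 0) equals (1/2)·√(r · (t + 1)) if r = p + 1, equals −(1/2)·√(t · (r + 1)) if p = r + 1, and equals 0 if |p − r| ≠ 1. -/
/-!
At `β = 0` one has `cos = 1` and `sin = 0`, so in the sum defining `wignerd` only terms with sine
exponent `r + 2s - p = 0` contribute to the value, and only those with exponent `1` to the first
derivative. Since `r + 2s - p = s + (r + s - p)` is a sum of two nonnegative integers on the
summation range, exponent `0` means `s = 0`, `p = r`, and exponent `1` means either `s = 0`,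
`r = p + 1` or `s = 1`, `p = r + 1`. The surviving coefficient is then simplified with
`sqrt_factorial_succ`. The `α`- and `γ`-derivatives are those of an exponential times `d(0)`.
-/

/-- The Wigner little-d function `d^ℓ_{μm}(β)` encoded via the natural numbers
`p = ℓ + μ`, `q = ℓ − μ`, `r = ℓ + m`, `t = ℓ − m` (so `p + q = r + t = 2ℓ`). -/
noncomputable def wignerd (p q r t : ℕ) (β : ℝ) : ℝ :=
  Real.sqrt ((p.factorial : ℝ) * q.factorial * r.factorial * t.factorial) *
    ∑ s ∈ Finset.Icc (p - r) (min p t),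
      ((-1 : ℝ) ^ s * Real.cos (β / 2) ^ (2 * p + q - r - 2 * s) *
          Real.sin (β / 2) ^ (r + 2 * s - p)) /
        (((p - s).factorial : ℝ) * (s.factorial : ℝ) * ((r + s - p).factorial : ℝ) *
          ((t - s).factorial : ℝ))

/-- The Wigner-D matrix entry `D^ℓ_{μm}(α, β, γ) = e^{−iμα} d^ℓ_{μm}(β) e^{−imγ}`
in the ZYZ Euler-angle convention, with `μ = (p − q)/2` and `m = (r − t)/2`. -/
noncomputable def wignerD (p q r t : ℕ) (α β γ : ℝ) : ℂ :=
  Complex.exp (-Complex.I * (((p : ℂ) - (q : ℂ)) / 2) * (α : ℂ)) *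
    ((wignerd p q r t β : ℝ) : ℂ) *
    Complex.exp (-Complex.I * (((r : ℂ) - (t : ℂ)) / 2) * (γ : ℂ))

/-- The monomial `cos(β/2)^a sin(β/2)^b` has a nonzero derivative at `0` only for `b = 1`. -/
lemma hasDerivAt_cos_pow_mul_sin_pow (a b : ℕ) :
    HasDerivAt (fun β : ℝ => Real.cos (β / 2) ^ a * Real.sin (β / 2) ^ b)
      (if b = 1 then 1 / 2 else 0) 0 := by
  have h2 : HasDerivAt (fun β : ℝ => β / 2) (1 / 2) 0 := (hasDerivAt_id 0).div_const 2
  have hc := (h2.cos.pow a).mul (h2.sin.pow b)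
  refine hc.congr_deriv ?_
  rcases b with _ | _ | b <;> simp

/-- At `β = 0` only the term with vanishing sine exponent survives; on the summation range this
forces `s = 0` and `p = r`. -/
lemma wignerd_zero (p q r t : ℕ) (h : p + q = r + t) :
    wignerd p q r t 0 = if p = r then 1 else 0 := by
  unfold wignerd
  split_ifs with hpr
  · subst hpr
    obtain rfl : q = t := by omega
    rw [Finset.sum_eq_single 0]
    · have e : (p.factorial : ℝ) * q.factorial * p.factorial * q.factorial
          = (p.factorial * q.factorial) ^ 2 := by ring
      have hp : (p.factorial : ℝ) ≠ 0 := by positivity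
      have hq : (q.factorial : ℝ) ≠ 0 := by positivity
      rw [e, Real.sqrt_sq (by positivity)]
      simp
      field_simp
    · intro s _ hs
      simp [hs]
    · simp
  · rw [Finset.sum_eq_zero, mul_zero]
    intro s hs
    rw [Finset.mem_Icc] at hs
    have : r + 2 * s - p ≠ 0 := by omega
    simp [this]

/-- Termwise differentiation of the defining sum at `β = 0`. -/
lemma hasDerivAt_wignerd (p q r t : ℕ) :
    HasDerivAt (wignerd p q r t)
      (Real.sqrt ((p.factorial : ℝ) * q.factorial * r.factorial * t.factorial) *
        ∑ s ∈ Finset.Icc (p - r) (min p t),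
          ((-1 : ℝ) ^ s * (if r + 2 * s - p = 1 then 1 / 2 else 0)) /
            (((p - s).factorial : ℝ) * (s.factorial : ℝ) * ((r + s - p).factorial : ℝ) *
              ((t - s).factorial : ℝ))) 0 := by
  unfold wignerd
  refine HasDerivAt.const_mul _ (HasDerivAt.fun_sum fun s _ => HasDerivAt.div_const ?_ _)
  simp only [mul_assoc]
  exact (hasDerivAt_cos_pow_mul_sin_pow _ _).const_mul _

/-- The factorial prefactor collapses to the square root of the ladder coefficient. -/
lemma sqrt_factorial_succ (a b : ℕ) :
    Real.sqrt ((a.factorial : ℝ) * (b + 1).factorial * (a + 1).factorial * b.factorial)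
      = a.factorial * b.factorial * Real.sqrt (((a : ℝ) + 1) * ((b : ℝ) + 1)) := by
  have e : (a.factorial : ℝ) * (b + 1).factorial * (a + 1).factorial * b.factorial
      = (a.factorial * b.factorial) ^ 2 * (((a : ℝ) + 1) * ((b : ℝ) + 1)) := by
    push_cast [Nat.factorial_succ]
    ring
  rw [e, Real.sqrt_mul (by positivity), Real.sqrt_sq (by positivity)]

lemma hasDerivAt_wignerd_raise (p t : ℕ) :
    HasDerivAt (wignerd p (t + 1) (p + 1) t)
      (Real.sqrt (((p : ℝ) + 1) * ((t : ℝ) + 1)) / 2) 0 := by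
  convert hasDerivAt_wignerd p (t + 1) (p + 1) t using 1
  rw [sqrt_factorial_succ, Finset.sum_eq_single 0]
  · have hp : (p.factorial : ℝ) ≠ 0 := by positivity
    have ht : (t.factorial : ℝ) ≠ 0 := by positivity
    simp
    field_simp
  · intro s _ hs
    have : p + 1 + 2 * s - p ≠ 1 := by omega
    simp [this]
  · simp

lemma hasDerivAt_wignerd_lower (r q : ℕ) :
    HasDerivAt (wignerd (r + 1) q r (q + 1))
      (-(Real.sqrt (((r : ℝ) + 1) * ((q : ℝ) + 1)) / 2)) 0 := by
  convert hasDerivAt_wignerd (r + 1) q r (q + 1) using 1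
  have e : ((r + 1).factorial : ℝ) * q.factorial * r.factorial * (q + 1).factorial
      = (r.factorial : ℝ) * (q + 1).factorial * (r + 1).factorial * q.factorial := by ring
  rw [e, sqrt_factorial_succ, Finset.sum_eq_single 1]
  · have hr : (r.factorial : ℝ) ≠ 0 := by positivity
    have hq : (q.factorial : ℝ) ≠ 0 := by positivity
    have h1 : r + 2 - (r + 1) = 1 := by omega
    simp [h1]
    field_simp
  · intro s hs hs1
    rw [Finset.mem_Icc] at hs
    have : r + 2 * s - (r + 1) ≠ 1 := by omega
    simp [this]
  · simp

lemma hasDerivAt_wignerd_other (p q r t : ℕ) (h1 : r ≠ p + 1) (h2 : p ≠ r + 1) :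
    HasDerivAt (wignerd p q r t) 0 0 := by
  convert hasDerivAt_wignerd p q r t using 1
  rw [Finset.sum_eq_zero, mul_zero]
  intro s hs
  rw [Finset.mem_Icc] at hs
  -- `r + 2s - p = s + (r + s - p)` on the range, so the value `1` would need `|p - r| = 1`.
  have : r + 2 * s - p ≠ 1 := by omega
  simp [this]

lemma deriv_wignerD_beta {p q r t : ℕ} {c : ℝ} (hd : HasDerivAt (wignerd p q r t) c 0) :
    deriv (fun b : ℝ => wignerD p q r t 0 b 0) 0 = (c : ℂ) := by
  have e : (fun b : ℝ => wignerD p q r t 0 b 0) = fun b : ℝ => ((wignerd p q r t b : ℝ) : ℂ) := by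
    funext b
    simp [wignerD]
  rw [e]
  exact hd.ofReal_comp.deriv

lemma deriv_exp_mul_ofReal (z : ℂ) : deriv (fun a : ℝ => Complex.exp (z * (a : ℂ))) 0 = z := by
  have h := (((hasDerivAt_id (0 : ℂ)).const_mul z).cexp).comp_ofReal (z := 0)
  simpa using h.deriv

/-- Derivatives of the Wigner-D matrices at the neutral element: `d(0) = δ_{μm}`;
`∂_α D(I) = ∂_γ D(I) = −i m δ_{μm}`; and `∂_β D(I)` equals `(1/2)√((ℓ−m+1)(ℓ+m))`
if `m = μ + 1`, `−(1/2)√((ℓ+m+1)(ℓ−m))` if `m = μ − 1`, and `0` if `|μ − m| ≠ 1`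
(in the encoding `p = ℓ + μ`, `r = ℓ + m`, `t = ℓ − m`: `ℓ − m + 1 = t + 1`, `ℓ + m = r`,
`ℓ + m + 1 = r + 1`, `ℓ − m = t`, and `m = μ ± 1` reads `r = p + 1` resp. `p = r + 1`). -/
theorem stmt14 (p q r t : ℕ) (h : p + q = r + t) :
    (wignerd p q r t 0 = if p = r then 1 else 0) ∧
    (deriv (fun a : ℝ => wignerD p q r t a 0 0) 0 =
      if p = r then -Complex.I * (((r : ℂ) - (t : ℂ)) / 2) else 0) ∧
    (deriv (fun c : ℝ => wignerD p q r t 0 0 c) 0 =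
      if p = r then -Complex.I * (((r : ℂ) - (t : ℂ)) / 2) else 0) ∧
    (r = p + 1 → deriv (fun b : ℝ => wignerD p q r t 0 b 0) 0 =
      ((Real.sqrt ((r : ℝ) * ((t : ℝ) + 1)) / 2 : ℝ) : ℂ)) ∧
    (p = r + 1 → deriv (fun b : ℝ => wignerD p q r t 0 b 0) 0 =
      -((Real.sqrt ((t : ℝ) * ((r : ℝ) + 1)) / 2 : ℝ) : ℂ)) ∧
    (r ≠ p + 1 → p ≠ r + 1 → deriv (fun b : ℝ => wignerD p q r t 0 b 0) 0 = 0) := by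
  have h0 := wignerd_zero p q r t h
  refine ⟨h0, ?_, ?_, ?_, ?_, ?_⟩
  · by_cases hpr : p = r
    · obtain rfl : q = t := by omega
      subst hpr
      simp only [wignerD, h0, if_true, Complex.ofReal_one, Complex.ofReal_zero, mul_zero,
        Complex.exp_zero, mul_one]
      exact deriv_exp_mul_ofReal _
    · simp [wignerD, h0, hpr]
  · by_cases hpr : p = r
    · simp only [wignerD, h0, if_pos hpr, Complex.ofReal_one, Complex.ofReal_zero, mul_zero,
        Complex.exp_zero, one_mul]
      exact deriv_exp_mul_ofReal _
    · simp [wignerD, h0, hpr]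
  · rintro rfl
    obtain rfl : q = t + 1 := by omega
    rw [deriv_wignerD_beta (hasDerivAt_wignerd_raise p t)]
    push_cast
    rfl
  · rintro rfl
    obtain rfl : t = q + 1 := by omega
    rw [deriv_wignerD_beta (hasDerivAt_wignerd_lower r q), mul_comm ((r : ℝ) + 1)]
    push_cast
    rfl
  · intro h1 h2
    rw [deriv_wignerD_beta (hasDerivAt_wignerd_other p q r t h1 h2), Complex.ofReal_zero]
end

section
/- Let n, m be natural numbers, let G be a subgroup of the group of invertible n×n complex matrices, and let S ⊆ Matrix (Fin n) (Fin n) ℂ be the set of matrices underlying the elements of G. Let ρ : Matrix (Fin n) (Fin n) ℂ → Matrix (Fin m) (Fin m) ℂ be a map that is multiplicative on G, i.e. ρ(g · h) = ρ(g) · ρ(h) for all g, h ∈ S (product of the underlying matrices). Suppose ρ has Fréchet derivative D (a continuous ℂ-linear map Matrix (Fin n) (Fin n) ℂ → Matrix (Fin m) (Fin m) ℂ) at the identity matrix within the set S (HasFDerivWithinAt ρ D S 1). Then for every g ∈ G (with underlying matrix also denoted g, and matrix inverse g⁻¹), ρ has Fréchet derivative X ↦ ρ(g) · D(g⁻¹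 · X) at the point g within S; that is, HasFDerivWithinAt ρ (fun X ↦ ρ(g) · D(g⁻¹ · X)) S g, where fun X ↦ ρ(g) · D(g⁻¹ · X) is a continuous ℂ-linear map. In particular, if D = 0 then the derivative of ρ within S vanishes at every point of S. -/
attribute [local instance] Matrix.linftyOpNormedRing Matrix.linftyOpNormedAlgebra

/-- For a (linear) matrix Lie group `G ≤ GL_n(ℂ)` with underlying set of matrices `S`,
and a map `ρ` that is multiplicative on `S` and Fréchet-differentiable within `S` at the
identity with derivative `D`, the derivative of `ρ` within `S` at any `g ∈ G` is
`X ↦ ρ(g) · D(g⁻¹ · X)`.  In particular, if `D = 0` then the derivative of `ρ` within `S`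
vanishes at every point of `S`. -/
theorem stmt15 (n m : ℕ)
    (G : Subgroup (Matrix (Fin n) (Fin n) ℂ)ˣ)
    (S : Set (Matrix (Fin n) (Fin n) ℂ))
    (hS : S = Units.val '' (G : Set (Matrix (Fin n) (Fin n) ℂ)ˣ))
    (ρ : Matrix (Fin n) (Fin n) ℂ → Matrix (Fin m) (Fin m) ℂ)
    (hmul : ∀ g h : Matrix (Fin n) (Fin n) ℂ, g ∈ S → h ∈ S → ρ (g * h) = ρ g * ρ h)
    (D : Matrix (Fin n) (Fin n) ℂ →L[ℂ] Matrix (Fin m) (Fin m) ℂ)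
    (hD : HasFDerivWithinAt ρ D S 1) :
    (∀ g : (Matrix (Fin n) (Fin n) ℂ)ˣ, g ∈ G →
      HasFDerivWithinAt ρ
        ((ContinuousLinearMap.mul ℂ (Matrix (Fin m) (Fin m) ℂ) (ρ ↑g)).comp
          (D.comp (ContinuousLinearMap.mul ℂ (Matrix (Fin n) (Fin n) ℂ) ↑(g⁻¹))))
        S ↑g) ∧
    (D = 0 → ∀ x ∈ S,
      HasFDerivWithinAt ρ
        (0 : Matrix (Fin n) (Fin n) ℂ →L[ℂ] Matrix (Fin m) (Fin m) ℂ) S x) := by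
  have key : ∀ g : (Matrix (Fin n) (Fin n) ℂ)ˣ, g ∈ G →
      HasFDerivWithinAt ρ
        ((ContinuousLinearMap.mul ℂ (Matrix (Fin m) (Fin m) ℂ) (ρ ↑g)).comp
          (D.comp (ContinuousLinearMap.mul ℂ (Matrix (Fin n) (Fin n) ℂ) ↑(g⁻¹))))
        S ↑g := by
    intro g hg
    have hgS : (g : Matrix (Fin n) (Fin n) ℂ) ∈ S := hS ▸ ⟨g, hg, rfl⟩
    -- Left translation by `g⁻¹` is linear, sends `g` to `1` and preserves `S`.
    have hL : HasFDerivWithinAt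
        (fun h => ContinuousLinearMap.mul ℂ (Matrix (Fin n) (Fin n) ℂ) ↑(g⁻¹) h)
        (ContinuousLinearMap.mul ℂ (Matrix (Fin n) (Fin n) ℂ) ↑(g⁻¹)) S ↑g :=
      ContinuousLinearMap.hasFDerivWithinAt _
    have hmaps : Set.MapsTo
        (fun h => ContinuousLinearMap.mul ℂ (Matrix (Fin n) (Fin n) ℂ) ↑(g⁻¹) h) S S := by
      intro x hx
      rw [hS] at hx ⊢
      obtain ⟨h, hh, rfl⟩ := hx
      exact ⟨g⁻¹ * h, G.mul_mem (G.inv_mem hg) hh, by simp⟩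
    have hD' : HasFDerivWithinAt ρ D S
        (ContinuousLinearMap.mul ℂ (Matrix (Fin n) (Fin n) ℂ) ↑(g⁻¹) ↑g) := by
      rw [ContinuousLinearMap.mul_apply', Units.inv_mul]
      exact hD
    have hcomp := (ContinuousLinearMap.mul ℂ (Matrix (Fin m) (Fin m) ℂ)
      (ρ ↑g)).hasFDerivAt.comp_hasFDerivWithinAt _ (hD'.comp _ hL hmaps)
    -- On `S`, multiplicativity gives `ρ h = ρ g * ρ (g⁻¹ * h)`.
    have heq : ∀ x ∈ S, ρ x = ρ ↑g * ρ ((g⁻¹).val * x) := by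
      intro x hx
      have hx' : (g⁻¹).val * x ∈ S := hmaps hx
      rw [← hmul _ _ hgS hx', Units.mul_inv_cancel_left]
    exact hcomp.congr heq (heq _ hgS)
  refine ⟨key, fun hD0 x hx => ?_⟩
  rw [hS] at hx
  obtain ⟨g, hg, rfl⟩ := hx
  subst hD0
  refine (key g hg).congr_fderiv (ContinuousLinearMap.ext fun X => ?_)
  exact mul_zero (ρ ↑g)
end
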